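/- Fix 1 < q < +∞, 0 < p < +∞, and 0 < T ≤ +∞. Let u : [0,T) × ℝ³ → ℝ³ be such that for each t ∈ [0,T) the vector field u(t,·) is a divergence-free Schwartz vector field, with strain tensor S(t,·) and vorticity ω(t,·) = ∇ × u(t,·), and suppose t ↦ ‖2S(t,·)e₃‖_{L^q} and t ↦ ‖(e₃ × ω)(t,·)‖_{L^q} are measurable. Then ∫₀^T ‖(e₃ × ω)(t,·)‖_{L^q}^p dt = +∞ if and only if ∫₀^T ‖2S(t,·)e₃‖_{L^q}^p dt = +∞. In particular, the Chae–Choe regularity criterion on the two vorticity components e₃ × ω is equivalent to the regularity criterion on S e₃. -/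

import Mathlib

open MeasureTheory ENNReal

noncomputable section

/-- The standard basis vectors of `EuclideanSpace ℝ (Fin 3)`. -/
def ee (i : Fin 3) : EuclideanSpace ℝ (Fin 3) := EuclideanSpace.single i 1

/-- The partial derivative `∂ᵢ uⱼ` of a vector field given by its three
(Schwartz) components. -/
def pdW (u : Fin 3 → SchwartzMap (EuclideanSpace ℝ (Fin 3)) ℝ) (i j : Fin 3)
    (x : EuclideanSpace ℝ (Fin 3)) : ℝ :=
  fderiv ℝ (u j) x (ee i)

/-- View a triple of reals as a vector in `ℝ³` with the Euclidean norm. -/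
def toE3 (f : Fin 3 → ℝ) : EuclideanSpace ℝ (Fin 3) :=
  (WithLp.equiv 2 (Fin 3 → ℝ)).symm f

/-- The strain tensor `S_ij = (∂ᵢ uⱼ + ∂ⱼ uᵢ)/2`. -/
def strainW (u : Fin 3 → SchwartzMap (EuclideanSpace ℝ (Fin 3)) ℝ)
    (x : EuclideanSpace ℝ (Fin 3)) : Matrix (Fin 3) (Fin 3) ℝ :=
  Matrix.of fun i j => (pdW u i j x + pdW u j i x) / 2

/-- The vorticity `ω = ∇ × u` (with 0-based indices). -/
def vortW (u : Fin 3 → SchwartzMap (EuclideanSpace ℝ (Fin 3)) ℝ)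
    (x : EuclideanSpace ℝ (Fin 3)) : Fin 3 → ℝ :=
  ![pdW u 1 2 x - pdW u 2 1 x, pdW u 2 0 x - pdW u 0 2 x, pdW u 0 1 x - pdW u 1 0 x]

/-- The cross product in `ℝ³`. -/
def cross (a b : Fin 3 → ℝ) : Fin 3 → ℝ :=
  ![a 1 * b 2 - a 2 * b 1, a 2 * b 0 - a 0 * b 2, a 0 * b 1 - a 1 * b 0]

/-- The field `x ↦ (e₃ × ω)(t, x)` of a time-dependent Schwartz vector field. -/
def e3CrossVortField (u : ℝ → Fin 3 → SchwartzMap (EuclideanSpace ℝ (Fin 3)) ℝ) (t : ℝ)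
    (x : EuclideanSpace ℝ (Fin 3)) : EuclideanSpace ℝ (Fin 3) :=
  toE3 (cross ![0, 0, 1] (vortW (u t) x))

/-- The field `x ↦ 2 S(t, x) e₃` of a time-dependent Schwartz vector field. -/
def twoStrainE3Field (u : ℝ → Fin 3 → SchwartzMap (EuclideanSpace ℝ (Fin 3)) ℝ) (t : ℝ)
    (x : EuclideanSpace ℝ (Fin 3)) : EuclideanSpace ℝ (Fin 3) :=
  toE3 (((2 : ℝ) • strainW (u t) x).mulVec ![0, 0, 1])

/-!
If `v` is divergence-free, then `Δ v₃ = ∑ₖ ∂ₖ (∂ₖ v₃ + σ ∂₃ vₖ)` for every real `σ`, so `∇v₃` is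
the image under the Riesz-type operator `∇ Δ⁻¹ div` of both fields `∇v₃ ± ∂₃v`, which are `2 S e₃`
and `e₃ × ω`. Hence `‖∇v₃‖_q` is bounded by a multiple of the `L^q` norm of either field, and so is
the other field, which is `2 ∇v₃` minus the given one.

The `L^q` bound for `∇ Δ⁻¹ div` comes from a Bellman function along the heat flow. With `b` a convex
function of size at most `|w|^q + |g|^{q'}` whose Hessian dominates products, heat extension makes
`∑ₖ ∫ b(wₖ, g) - ∫ (∂ᵢφ) g` nonincreasing in time, because the dissipation of `b` controls the time
derivative of the pairing, which is quadratic in `∇wₖ` and `∇g`. Comparing time `0` with `∞` bounds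
the pairing `∫ (∂ᵢφ) g`, and duality gives the norm.
-/

open scoped SchwartzMap LineDeriv Laplacian

section SchwartzTranslate

variable {V F : Type*} [NormedAddCommGroup V] [NormedSpace ℝ V] [NormedAddCommGroup F]
  [NormedSpace ℝ F]

lemma exists_norm_schwartz_le_inv_pow (f : 𝓢(V, F)) (m : ℕ) :
    ∃ C, 0 ≤ C ∧ ∀ x, ‖f x‖ ≤ C * ((1 + ‖x‖) ^ m)⁻¹ := by
  refine ⟨2 ^ m * (Finset.Iic (m, 0)).sup (fun m => SchwartzMap.seminorm ℝ m.1 m.2) f,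
    by positivity, fun x => ?_⟩
  have h := SchwartzMap.one_add_le_sup_seminorm_apply (𝕜 := ℝ) (m := (m, 0)) (k := m) (n := 0)
    le_rfl le_rfl f x
  rw [norm_iteratedFDeriv_zero] at h
  rwa [← div_eq_mul_inv, le_div_iff₀ (by positivity), mul_comm]

lemma one_add_norm_le_mul {s S : ℝ} (hs : |s| ≤ S) (x z : V) :
    1 + ‖x‖ ≤ (1 + ‖x + s • z‖) * (1 + S * ‖z‖) := by
  have h_tri : ‖x‖ ≤ ‖x + s • z‖ + S * ‖z‖ := by
    calc ‖x‖ = ‖(x + s • z) - s • z‖ := by simp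
      _ ≤ ‖x + s • z‖ + |s| * ‖z‖ := by
        rw [← Real.norm_eq_abs, ← norm_smul]; exact norm_sub_le _ _
      _ ≤ ‖x + s • z‖ + S * ‖z‖ := by gcongr
  have : 0 ≤ S * ‖z‖ := mul_nonneg ((abs_nonneg s).trans hs) (norm_nonneg z)
  nlinarith [norm_nonneg (x + s • z)]

lemma inv_one_add_norm_pow_le {s S : ℝ} (hs : |s| ≤ S) (m : ℕ) (x z : V) :
    ((1 + ‖x + s • z‖) ^ m)⁻¹ ≤ ((1 + ‖x‖) ^ m)⁻¹ * (1 + S * ‖z‖) ^ m := by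
  have : 0 ≤ S := (abs_nonneg s).trans hs
  rw [inv_mul_eq_div, le_div_iff₀ (by positivity), inv_mul_le_iff₀ (by positivity), ← mul_pow]
  gcongr
  exact one_add_norm_le_mul hs x z

lemma schwartz_hasLineDerivAt_comp_add_smul (f : 𝓢(V, F)) (s : ℝ) (x z v : V) :
    HasLineDerivAt ℝ (fun z => f (x + s • z)) (s • (∂_{v} f) (x + s • z)) z v := by
  have h_line : HasDerivAt (fun t : ℝ => x + s • (z + t • v)) (s • v) 0 := by
    simpa using ((((hasDerivAt_id (0 : ℝ)).smul_const v).const_add z).const_smul s).const_add x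
  have h_comp := (f.hasFDerivAt (x := x + s • (z + (0 : ℝ) • v))).comp_hasDerivAt 0 h_line
  simpa [HasLineDerivAt, SchwartzMap.lineDerivOp_apply_eq_fderiv, Function.comp_def] using h_comp

end SchwartzTranslate

section GaussianAverage

variable {V F : Type*} [NormedAddCommGroup V] [NormedAddCommGroup F] [NormedSpace ℝ F]

/-- The Gaussian weight `exp (-π ‖z‖²)`, normalized to have total mass one. -/
def gaussWeight (z : V) : ℝ := Real.exp (-Real.pi * ‖z‖ ^ 2)

lemma gaussWeight_pos (z : V) : 0 < gaussWeight z := Real.exp_pos _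

@[fun_prop]
lemma continuous_gaussWeight : Continuous (gaussWeight : V → ℝ) := by
  unfold gaussWeight; fun_prop

lemma norm_gaussWeight_smul (z : V) (y : F) : ‖gaussWeight z • y‖ = gaussWeight z * ‖y‖ := by
  rw [norm_smul, Real.norm_of_nonneg (gaussWeight_pos z).le]

variable [InnerProductSpace ℝ V]

lemma hasLineDerivAt_gaussWeight (z v : V) :
    HasLineDerivAt ℝ (gaussWeight : V → ℝ) (-(2 * Real.pi) * (inner ℝ z v * gaussWeight z)) z
      v := by
  have h_line : HasDerivAt (fun t : ℝ => z + t • v) v 0 := by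
    simpa using ((hasDerivAt_id (0 : ℝ)).smul_const v).const_add z
  have h_exp := ((h_line.norm_sq).const_mul (-Real.pi)).exp
  simp only [zero_smul, add_zero] at h_exp
  unfold HasLineDerivAt gaussWeight
  convert! h_exp using 1
  ring

lemma fderiv_schwartz_eq_sum {ι : Type*} [Fintype ι] (e : OrthonormalBasis ι ℝ V) (f : 𝓢(V, F))
    (x z : V) : fderiv ℝ f x z = ∑ i, inner ℝ z (e i) • (∂_{e i} f) x := by
  conv_lhs => rw [← e.sum_repr z]
  simp [SchwartzMap.lineDerivOp_apply_eq_fderiv, e.repr_apply_apply, real_inner_comm]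

lemma norm_inner_mul_gaussWeight_smul_le (f : 𝓢(V, F)) (x z v : V) :
    ‖(inner ℝ z v * gaussWeight z) • f x‖
      ≤ gaussWeight z * (1 + ‖z‖) * (‖v‖ * SchwartzMap.seminorm ℝ 0 0 f) := by
  have hw := (gaussWeight_pos z).le
  calc ‖(inner ℝ z v * gaussWeight z) • f x‖
      = ‖inner ℝ z v‖ * gaussWeight z * ‖f x‖ := by
        rw [norm_smul, norm_mul, Real.norm_of_nonneg hw]
    _ ≤ (1 + ‖z‖) * ‖v‖ * gaussWeight z * SchwartzMap.seminorm ℝ 0 0 f := by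
        have h_inner : ‖inner ℝ z v‖ ≤ (1 + ‖z‖) * ‖v‖ :=
          (norm_inner_le_norm z v).trans (by gcongr; linarith)
        gcongr
        exact SchwartzMap.norm_le_seminorm ℝ f x
    _ = _ := by ring

variable [FiniteDimensional ℝ V] [MeasurableSpace V] [BorelSpace V]

/-- The average of `f` over a Gaussian centred at `x` with standard deviation proportional
to `s`, i.e. the heat flow started at `f`, parametrized by the square root of time. -/
def gaussAvg (s : ℝ) (f : 𝓢(V, F)) (x : V) : F := ∫ z, gaussWeight z • f (x + s • z)

lemma integral_gaussWeight : ∫ z : V, gaussWeight z = 1 := by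
  unfold gaussWeight
  rw [GaussianFourier.integral_rexp_neg_mul_sq_norm Real.pi_pos, div_self Real.pi_ne_zero,
    Real.one_rpow]

lemma integrable_gaussWeight_mul_pow (m : ℕ) {S : ℝ} (hS : 0 ≤ S) :
    Integrable fun z : V => gaussWeight z * (1 + S * ‖z‖) ^ m := by
  have h_exp : Integrable fun z : V => Real.exp (-1 * ‖z‖ ^ 2) := by
    apply Integrable.of_integral_ne_zero
    rw [GaussianFourier.integral_rexp_neg_mul_sq_norm one_pos]
    positivity
  refine (h_exp.const_mul ((m.factorial : ℝ) * Real.exp (1 + S ^ 2 / 2))).mono'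
    (by fun_prop) (.of_forall fun z => ?_)
  have h0 : 0 ≤ 1 + S * ‖z‖ := by positivity
  have h_pow : (1 + S * ‖z‖) ^ m ≤ Real.exp (1 + S * ‖z‖) * m.factorial :=
    (div_le_iff₀ (by positivity)).1 (Real.pow_div_factorial_le_exp _ h0 m)
  rw [Real.norm_of_nonneg (mul_nonneg (gaussWeight_pos z).le (by positivity))]
  calc gaussWeight z * (1 + S * ‖z‖) ^ m
      ≤ gaussWeight z * (Real.exp (1 + S * ‖z‖) * m.factorial) :=
        mul_le_mul_of_nonneg_left h_pow (gaussWeight_pos z).le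
    _ = m.factorial * Real.exp (-Real.pi * ‖z‖ ^ 2 + (1 + S * ‖z‖)) := by
        rw [Real.exp_add (-Real.pi * ‖z‖ ^ 2)]; unfold gaussWeight; ring
    _ ≤ m.factorial * Real.exp (1 + S ^ 2 / 2 + -1 * ‖z‖ ^ 2) := by
        refine mul_le_mul_of_nonneg_left (Real.exp_le_exp.2 ?_) (by positivity)
        nlinarith [Real.pi_gt_three, sq_nonneg (S - ‖z‖), sq_nonneg ‖z‖]
    _ = _ := by rw [Real.exp_add (1 + S ^ 2 / 2)]; ring

lemma integrable_gaussWeight : Integrable (gaussWeight : V → ℝ) := by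
  simpa using integrable_gaussWeight_mul_pow (V := V) 0 le_rfl

lemma integrable_gaussWeight_mul_one_add_norm :
    Integrable fun z : V => gaussWeight z * (1 + ‖z‖) := by
  simpa using integrable_gaussWeight_mul_pow (V := V) 1 zero_le_one

lemma integrable_gaussWeight_smul (s : ℝ) (f : 𝓢(V, F)) (x : V) :
    Integrable fun z => gaussWeight z • f (x + s • z) := by
  refine (integrable_gaussWeight.mul_const (SchwartzMap.seminorm ℝ 0 0 f)).mono'
    (by fun_prop) (.of_forall fun z => ?_)
  rw [norm_gaussWeight_smul]
  exact mul_le_mul_of_nonneg_left (SchwartzMap.norm_le_seminorm ℝ f _) (gaussWeight_pos z).le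

lemma exists_norm_gaussAvg_le_inv_pow (f : 𝓢(V, F)) (m : ℕ) {S : ℝ} (hS : 0 ≤ S) :
    ∃ C, 0 ≤ C ∧ ∀ s, |s| ≤ S → ∀ x, ‖gaussAvg s f x‖ ≤ C * ((1 + ‖x‖) ^ m)⁻¹ := by
  obtain ⟨C, hC, hf⟩ := exists_norm_schwartz_le_inv_pow f m
  have h_int := integrable_gaussWeight_mul_pow (V := V) m hS
  have h0 : 0 ≤ ∫ z : V, gaussWeight z * (1 + S * ‖z‖) ^ m :=
    integral_nonneg fun z => mul_nonneg (gaussWeight_pos z).le (by positivity)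
  refine ⟨C * ∫ z : V, gaussWeight z * (1 + S * ‖z‖) ^ m, by positivity, fun s hs x => ?_⟩
  rw [mul_right_comm, ← integral_const_mul]
  refine norm_integral_le_of_norm_le (h_int.const_mul _) (.of_forall fun z => ?_)
  calc ‖gaussWeight z • f (x + s • z)‖
      ≤ gaussWeight z * (C * (((1 + ‖x‖) ^ m)⁻¹ * (1 + S * ‖z‖) ^ m)) := by
        rw [norm_gaussWeight_smul]
        refine mul_le_mul_of_nonneg_left ((hf _).trans ?_) (gaussWeight_pos z).le
        exact mul_le_mul_of_nonneg_left (inv_one_add_norm_pow_le hs m x z) hC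
    _ = _ := by ring

lemma norm_gaussAvg_le (s : ℝ) (f : 𝓢(V, F)) (x : V) :
    ‖gaussAvg s f x‖ ≤ SchwartzMap.seminorm ℝ 0 0 f := by
  rw [← one_mul (SchwartzMap.seminorm ℝ 0 0 f), ← integral_gaussWeight (V := V),
    ← integral_mul_const]
  refine norm_integral_le_of_norm_le (integrable_gaussWeight.mul_const _) (.of_forall fun z => ?_)
  rw [norm_gaussWeight_smul]
  exact mul_le_mul_of_nonneg_left (SchwartzMap.norm_le_seminorm ℝ f _) (gaussWeight_pos z).le

@[fun_prop]
lemma continuous_gaussAvg (s : ℝ) (f : 𝓢(V, F)) : Continuous (gaussAvg s f) := by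
  refine continuous_of_dominated
    (bound := fun z => gaussWeight z * SchwartzMap.seminorm ℝ 0 0 f)
    (fun x => (integrable_gaussWeight_smul s f x).aestronglyMeasurable)
    (fun x => .of_forall fun z => ?_) (integrable_gaussWeight.mul_const _)
    (.of_forall fun z => by fun_prop)
  rw [norm_gaussWeight_smul]
  exact mul_le_mul_of_nonneg_left (SchwartzMap.norm_le_seminorm ℝ f _) (gaussWeight_pos z).le

lemma integrable_inv_one_add_norm_pow :
    Integrable fun x : V => ((1 + ‖x‖) ^ (Module.finrank ℝ V + 1))⁻¹ := by
  have h := integrable_one_add_norm (E := V) (μ := volume)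
    (r := ((Module.finrank ℝ V + 1 : ℕ) : ℝ)) (by push_cast; linarith)
  refine h.congr (.of_forall fun x => ?_)
  simp only
  rw [Real.rpow_neg (by positivity), Real.rpow_natCast]

lemma integrable_gaussAvg (s : ℝ) (f : 𝓢(V, F)) : Integrable (gaussAvg s f) := by
  obtain ⟨C, -, hC⟩ :=
    exists_norm_gaussAvg_le_inv_pow f (Module.finrank ℝ V + 1) (abs_nonneg s)
  exact (integrable_inv_one_add_norm_pow.const_mul C).mono'
    (continuous_gaussAvg s f).aestronglyMeasurable (.of_forall fun x => hC s le_rfl x)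

@[simp]
lemma gaussAvg_zero_left [CompleteSpace F] (f : 𝓢(V, F)) (x : V) : gaussAvg 0 f x = f x := by
  simp [gaussAvg, integral_smul_const, integral_gaussWeight]

lemma gaussAvg_sum {ι : Type*} (t : Finset ι) (s : ℝ) (f : ι → 𝓢(V, F)) (x : V) :
    gaussAvg s (∑ i ∈ t, f i) x = ∑ i ∈ t, gaussAvg s (f i) x := by
  unfold gaussAvg
  rw [← integral_finsetSum _ fun i _ => integrable_gaussWeight_smul s (f i) x]
  simp [Finset.smul_sum]

lemma hasLineDerivAt_gaussAvg (s : ℝ) (f : 𝓢(V, F)) (x v : V) :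
    HasLineDerivAt ℝ (gaussAvg s f) (gaussAvg s (∂_{v} f) x) x v := by
  have key := (hasDerivAt_integral_of_dominated_loc_of_deriv_le (μ := volume) (𝕜 := ℝ)
    (F := fun t z => gaussWeight z • f (x + t • v + s • z))
    (F' := fun t z => gaussWeight z • (∂_{v} f) (x + t • v + s • z)) (x₀ := (0 : ℝ))
    (bound := fun z : V => gaussWeight z * SchwartzMap.seminorm ℝ 0 0 (∂_{v} f)) Filter.univ_mem
    (.of_forall fun t => (integrable_gaussWeight_smul s f _).aestronglyMeasurable)
    (integrable_gaussWeight_smul s f _)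
    (integrable_gaussWeight_smul s (∂_{v} f) _).aestronglyMeasurable
    (.of_forall fun z t _ => ?_) (integrable_gaussWeight.mul_const _)
    (.of_forall fun z t _ => ?_)).2
  · simpa [HasLineDerivAt, gaussAvg] using key
  · rw [norm_gaussWeight_smul]
    exact mul_le_mul_of_nonneg_left (SchwartzMap.norm_le_seminorm ℝ _ _) (gaussWeight_pos z).le
  · refine HasDerivAt.const_smul _ ?_
    have h_line : HasDerivAt (fun t : ℝ => x + t • v + s • z) v t := by
      simpa using (((hasDerivAt_id t).smul_const v).const_add x).add_const (s • z)
    exact (f.hasFDerivAt (x := x + t • v + s • z)).comp_hasDerivAt t h_line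

lemma integrable_inner_mul_gaussWeight_smul (s : ℝ) (f : 𝓢(V, F)) (x v : V) :
    Integrable fun z => (inner ℝ z v * gaussWeight z) • f (x + s • z) :=
  (integrable_gaussWeight_mul_one_add_norm.mul_const _).mono' (by fun_prop)
    (.of_forall fun z => norm_inner_mul_gaussWeight_smul_le f (x + s • z) z v)

lemma integral_inner_mul_gaussWeight_smul (s : ℝ) (f : 𝓢(V, F)) (x v : V) :
    ∫ z, (inner ℝ z v * gaussWeight z) • f (x + s • z)
      = (s / (2 * Real.pi)) • gaussAvg s (∂_{v} f) x := by
  have key := integral_bilinear_hasLineDerivAt_right_eq_neg_left_of_integrable (μ := volume)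
    (f := (gaussWeight : V → ℝ)) (f' := fun z => -(2 * Real.pi) * (inner ℝ z v * gaussWeight z))
    (g := fun z => f (x + s • z)) (g' := fun z => s • (∂_{v} f) (x + s • z))
    (v := v) (B := ContinuousLinearMap.lsmul ℝ ℝ)
    (by simp only [ContinuousLinearMap.lsmul_apply, mul_smul (-(2 * Real.pi))]
        exact (integrable_inner_mul_gaussWeight_smul s f x v).fun_smul _)
    (by simp only [ContinuousLinearMap.lsmul_apply, smul_comm _ s]
        exact (integrable_gaussWeight_smul s (∂_{v} f) x).fun_smul s)
    (integrable_gaussWeight_smul s f x)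
    (fun z _ => hasLineDerivAt_gaussWeight z v)
    (fun z _ => schwartz_hasLineDerivAt_comp_add_smul f s x z v)
  simp only [ContinuousLinearMap.lsmul_apply, smul_comm _ s, mul_smul (-(2 * Real.pi)),
    integral_smul, neg_smul, integral_neg, neg_neg] at key
  rw [gaussAvg, div_eq_inv_mul, mul_smul, key, smul_smul, inv_mul_cancel₀ (by positivity),
    one_smul]

lemma hasDerivAt_gaussAvg_integral_fderiv (s : ℝ) (f : 𝓢(V, F)) (x : V) :
    HasDerivAt (fun r => gaussAvg r f x) (∫ z, gaussWeight z • fderiv ℝ f (x + s • z) z) s := by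
  set M := SchwartzMap.seminorm ℝ 0 0 (SchwartzMap.fderivCLM ℝ V F f)
  refine (hasDerivAt_integral_of_dominated_loc_of_deriv_le (μ := volume) (𝕜 := ℝ)
    (F := fun r z => gaussWeight z • f (x + r • z))
    (F' := fun r z => gaussWeight z • fderiv ℝ f (x + r • z) z) (x₀ := s)
    (bound := fun z : V => gaussWeight z * (1 + ‖z‖) * M) Filter.univ_mem
    (.of_forall fun t => (integrable_gaussWeight_smul t f _).aestronglyMeasurable)
    (integrable_gaussWeight_smul s f _) ?_ (.of_forall fun z t _ => ?_)
    (integrable_gaussWeight_mul_one_add_norm.mul_const _)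
    (.of_forall fun z t _ => ?_)).2
  · have : Continuous (fderiv ℝ f) := (f.smooth 1).continuous_fderiv one_ne_zero
    exact Continuous.aestronglyMeasurable (by fun_prop)
  · rw [norm_gaussWeight_smul, mul_assoc]
    refine mul_le_mul_of_nonneg_left ?_ (gaussWeight_pos z).le
    calc ‖fderiv ℝ f (x + t • z) z‖ ≤ ‖fderiv ℝ f (x + t • z)‖ * ‖z‖ :=
          ContinuousLinearMap.le_opNorm _ _
      _ ≤ M * (1 + ‖z‖) := by
          have := SchwartzMap.norm_le_seminorm ℝ (SchwartzMap.fderivCLM ℝ V F f) (x + t • z)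
          gcongr
          · exact this
          · linarith
      _ = (1 + ‖z‖) * M := by ring
  · have h_line : HasDerivAt (fun t : ℝ => x + t • z) z t := by
      simpa using ((hasDerivAt_id t).smul_const z).const_add x
    exact ((f.hasFDerivAt (x := x + t • z)).comp_hasDerivAt t h_line).const_smul _

/-- The heat equation for `r ↦ gaussAvg (√r)`, written in the variable `s = √r`. -/
lemma hasDerivAt_gaussAvg (s : ℝ) (f : 𝓢(V, F)) (x : V) :
    HasDerivAt (fun r => gaussAvg r f x) ((s / (2 * Real.pi)) • gaussAvg s (Δ f) x) s := by
  let e := stdOrthonormalBasis ℝ V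
  convert! hasDerivAt_gaussAvg_integral_fderiv s f x using 1
  simp only [SchwartzMap.laplacian_eq_sum e, gaussAvg_sum, Finset.smul_sum,
    ← integral_inner_mul_gaussWeight_smul]
  rw [← integral_finsetSum _ fun i _ => integrable_inner_mul_gaussWeight_smul s _ x _]
  simp only [fderiv_schwartz_eq_sum e, Finset.smul_sum, smul_smul, mul_comm]

lemma exists_norm_gaussAvg_lineDeriv_le (f : 𝓢(V, F)) (v : V) :
    ∃ C, ∀ s, 0 < s → ∀ x, ‖gaussAvg s (∂_{v} f) x‖ ≤ C / s := by
  refine ⟨2 * Real.pi * ∫ z : V, gaussWeight z * (1 + ‖z‖) *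
    (‖v‖ * SchwartzMap.seminorm ℝ 0 0 f), fun s hs x => ?_⟩
  have h_moment : ‖(s / (2 * Real.pi)) • gaussAvg s (∂_{v} f) x‖ ≤
      ∫ z : V, gaussWeight z * (1 + ‖z‖) * (‖v‖ * SchwartzMap.seminorm ℝ 0 0 f) := by
    rw [← integral_inner_mul_gaussWeight_smul]
    exact norm_integral_le_of_norm_le
      (integrable_gaussWeight_mul_one_add_norm.mul_const _)
      (.of_forall fun z => norm_inner_mul_gaussWeight_smul_le f (x + s • z) z v)
  rw [norm_smul, Real.norm_of_nonneg (by positivity), div_mul_eq_mul_div,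
    div_le_iff₀ (by positivity)] at h_moment
  rw [le_div_iff₀ hs]
  linarith

lemma integral_norm_gaussAvg_le (s : ℝ) (f : 𝓢(V, F)) :
    ∫ x, ‖gaussAvg s f x‖ ≤ ∫ x, ‖f x‖ := by
  have h_int : Integrable (fun p : V × V => gaussWeight p.2 * ‖f (p.1 + s • p.2)‖)
      (volume.prod volume) := by
    rw [integrable_prod_iff' (by fun_prop)]
    refine ⟨.of_forall fun z => (f.integrable.comp_add_right (s • z)).norm.const_mul
      (gaussWeight z), ?_⟩
    simp only [norm_mul, Real.norm_of_nonneg (gaussWeight_pos _).le, integral_const_mul,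
      norm_norm, integral_add_right_eq_self (fun x => ‖f x‖)]
    exact integrable_gaussWeight.mul_const _
  calc ∫ x, ‖gaussAvg s f x‖ ≤ ∫ x, ∫ z, gaussWeight z * ‖f (x + s • z)‖ := by
        refine integral_mono (integrable_gaussAvg s f).norm h_int.integral_prod_left fun x => ?_
        simp only [gaussAvg, ← norm_gaussWeight_smul]
        exact norm_integral_le_integral_norm _
    _ = ∫ z, ∫ x, gaussWeight z * ‖f (x + s • z)‖ := integral_integral_swap h_int
    _ = ∫ z : V, gaussWeight z * ∫ x, ‖f x‖ := by
        simp only [integral_const_mul, integral_add_right_eq_self (fun x => ‖f x‖)]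
    _ = ∫ x, ‖f x‖ := by rw [integral_mul_const, integral_gaussWeight, one_mul]

end GaussianAverage

section HeatFlow

variable {V F G : Type*} [NormedAddCommGroup V] [InnerProductSpace ℝ V]
  [FiniteDimensional ℝ V] [MeasurableSpace V] [BorelSpace V]
  [NormedAddCommGroup F] [NormedSpace ℝ F] [NormedAddCommGroup G] [NormedSpace ℝ G]

lemma integrable_clm_gaussAvg {A : V → F →L[ℝ] G} (hA : Continuous A) {M : ℝ}
    (hM : ∀ x, ‖A x‖ ≤ M) (s : ℝ) (f : 𝓢(V, F)) : Integrable fun x => A x (gaussAvg s f x) :=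
  (ContinuousLinearMap.id ℝ (F →L[ℝ] G)).integrable_of_bilin_of_bdd_left M
    hA.aestronglyMeasurable (.of_forall hM) (integrable_gaussAvg s f)

lemma integral_clm_gaussAvg_lineDeriv {A A' : V → F →L[ℝ] G} (hA : Continuous A)
    (hA' : Continuous A') {M M' : ℝ} (hM : ∀ x, ‖A x‖ ≤ M) (hM' : ∀ x, ‖A' x‖ ≤ M') {v : V}
    (hAA' : ∀ x, HasLineDerivAt ℝ A (A' x) x v) (s : ℝ) (f : 𝓢(V, F)) :
    ∫ x, A x (gaussAvg s (∂_{v} f) x) = -∫ x, A' x (gaussAvg s f x) :=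
  integral_bilinear_hasLineDerivAt_right_eq_neg_left_of_integrable
    (B := ContinuousLinearMap.id ℝ (F →L[ℝ] G)) (integrable_clm_gaussAvg hA' hM' s f)
    (integrable_clm_gaussAvg hA hM s (∂_{v} f)) (integrable_clm_gaussAvg hA hM s f)
    (fun x _ => hAA' x) (fun x _ => hasLineDerivAt_gaussAvg s f x v)

lemma hasLineDerivAt_comp_gaussAvg {c : F → G} (hc : Differentiable ℝ c) (s : ℝ) (f : 𝓢(V, F))
    (x v : V) :
    HasLineDerivAt ℝ (fun x => c (gaussAvg s f x))
      (fderiv ℝ c (gaussAvg s f x) (gaussAvg s (∂_{v} f) x)) x v := by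
  have h_avg : HasDerivAt (fun t : ℝ => gaussAvg s f (x + t • v)) (gaussAvg s (∂_{v} f) x) 0 :=
    hasLineDerivAt_gaussAvg s f x v
  simpa [HasLineDerivAt, Function.comp_def] using
    (hc (gaussAvg s f (x + (0 : ℝ) • v))).hasFDerivAt.comp_hasDerivAt 0 h_avg

/-- The Hessian of `b` at the Gaussian average of `f`, evaluated twice on the derivative of that
average in the direction `v`. -/
def hessAlong (b : F → G) (s : ℝ) (f : 𝓢(V, F)) (v x : V) : G :=
  fderiv ℝ (fderiv ℝ b) (gaussAvg s f x) (gaussAvg s (∂_{v} f) x) (gaussAvg s (∂_{v} f) x)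

lemma continuous_fderiv_fderiv {b : F → G} (hb : ContDiff ℝ 2 b) :
    Continuous (fderiv ℝ (fderiv ℝ b)) :=
  (hb.fderiv_right (m := 1) (by norm_num)).continuous_fderiv one_ne_zero

lemma continuous_fderiv_fderiv_comp_gaussAvg {b : F → G} (hb : ContDiff ℝ 2 b) (s : ℝ)
    (f h : 𝓢(V, F)) :
    Continuous fun x => fderiv ℝ (fderiv ℝ b) (gaussAvg s f x) (gaussAvg s h x) :=
  ((continuous_fderiv_fderiv hb).comp (continuous_gaussAvg s f)).clm_apply
    (continuous_gaussAvg s h)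

variable [ProperSpace F]

lemma exists_norm_comp_gaussAvg_le {H : Type*} [NormedAddCommGroup H] {c : F → H}
    (hc : Continuous c) (f : 𝓢(V, F)) :
    ∃ M, 0 ≤ M ∧ ∀ s x, ‖c (gaussAvg s f x)‖ ≤ M := by
  obtain ⟨M, hM⟩ := (isCompact_closedBall (0 : F) (SchwartzMap.seminorm ℝ 0 0 f)
    ).exists_bound_of_continuousOn hc.continuousOn
  have h_le : ∀ s x, ‖c (gaussAvg s f x)‖ ≤ M := fun s x =>
    hM _ (mem_closedBall_zero_iff.2 (norm_gaussAvg_le s f x))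
  exact ⟨M, (norm_nonneg _).trans (h_le 0 0), h_le⟩

lemma exists_norm_le_mul_norm_of_contDiff {b : F → G} (hb : ContDiff ℝ 1 b) (h0 : b 0 = 0)
    (R : ℝ) : ∃ M, ∀ y, ‖y‖ ≤ R → ‖b y‖ ≤ M * ‖y‖ := by
  obtain ⟨M, hM⟩ := (isCompact_closedBall (0 : F) R).exists_bound_of_continuousOn
    (hb.continuous_fderiv one_ne_zero).continuousOn
  refine ⟨M, fun y hy => ?_⟩
  simpa [h0] using (convex_closedBall (0 : F) R).norm_image_sub_le_of_norm_fderiv_le (𝕜 := ℝ)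
    (fun y _ => hb.differentiable one_ne_zero y) hM
    (Metric.mem_closedBall_self ((norm_nonneg y).trans hy)) (mem_closedBall_zero_iff.2 hy)

lemma integrable_comp_gaussAvg {b : F → G} (hb : ContDiff ℝ 1 b) (h0 : b 0 = 0) (s : ℝ)
    (f : 𝓢(V, F)) : Integrable fun x => b (gaussAvg s f x) := by
  obtain ⟨M, hM⟩ := exists_norm_le_mul_norm_of_contDiff hb h0 (SchwartzMap.seminorm ℝ 0 0 f)
  exact ((integrable_gaussAvg s f).norm.const_mul M).mono'
    (hb.continuous.comp (continuous_gaussAvg s f)).aestronglyMeasurable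
    (.of_forall fun x => hM _ (norm_gaussAvg_le s f x))

lemma integrable_fderiv_comp_gaussAvg {b : F → G} (hb : ContDiff ℝ 1 b) (s : ℝ)
    (f h : 𝓢(V, F)) : Integrable fun x => fderiv ℝ b (gaussAvg s f x) (gaussAvg s h x) := by
  have hb' := hb.continuous_fderiv one_ne_zero
  obtain ⟨M, -, hM⟩ := exists_norm_comp_gaussAvg_le hb' f
  exact integrable_clm_gaussAvg (hb'.comp (continuous_gaussAvg s f)) (hM s) s h

lemma exists_norm_fderiv_fderiv_comp_gaussAvg_le {b : F → G} (hb : ContDiff ℝ 2 b)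
    (f h : 𝓢(V, F)) :
    ∃ M, ∀ s x, ‖fderiv ℝ (fderiv ℝ b) (gaussAvg s f x) (gaussAvg s h x)‖ ≤ M := by
  obtain ⟨M, -, hM⟩ :=
    exists_norm_comp_gaussAvg_le (H := F →L[ℝ] F →L[ℝ] G) (continuous_fderiv_fderiv hb) f
  exact ⟨M * SchwartzMap.seminorm ℝ 0 0 h, fun s x =>
    ContinuousLinearMap.le_of_opNorm_le_of_le _ (hM s x) (norm_gaussAvg_le s h x)⟩

lemma integrable_hessAlong {b : F → G} (hb : ContDiff ℝ 2 b) (s : ℝ) (f : 𝓢(V, F)) (v : V) :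
    Integrable (hessAlong b s f v) := by
  obtain ⟨M, hM⟩ := exists_norm_fderiv_fderiv_comp_gaussAvg_le hb f (∂_{v} f)
  exact integrable_clm_gaussAvg (continuous_fderiv_fderiv_comp_gaussAvg hb s f _) (hM s) s _

lemma integral_fderiv_comp_gaussAvg_lineDeriv_lineDeriv {b : F → G} (hb : ContDiff ℝ 2 b)
    (s : ℝ) (f : 𝓢(V, F)) (v : V) :
    ∫ x, fderiv ℝ b (gaussAvg s f x) (gaussAvg s (∂_{v} (∂_{v} f)) x)
      = -∫ x, hessAlong b s f v x := by
  have hb' : ContDiff ℝ 1 (fderiv ℝ b) := hb.fderiv_right (by norm_num)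
  obtain ⟨M, -, hM⟩ := exists_norm_comp_gaussAvg_le hb'.continuous f
  obtain ⟨M', hM'⟩ := exists_norm_fderiv_fderiv_comp_gaussAvg_le hb f (∂_{v} f)
  exact integral_clm_gaussAvg_lineDeriv (hb'.continuous.comp (continuous_gaussAvg s f))
    (continuous_fderiv_fderiv_comp_gaussAvg hb s f _) (hM s) (hM' s)
    (hasLineDerivAt_comp_gaussAvg (hb'.differentiable one_ne_zero) s f · v) s _

lemma hasDerivAt_integral_comp_gaussAvg_laplacian {b : F → G} (hb : ContDiff ℝ 1 b)
    (h0 : b 0 = 0) (f : 𝓢(V, F)) (s : ℝ) :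
    HasDerivAt (fun r => ∫ x, b (gaussAvg r f x))
      (∫ x, fderiv ℝ b (gaussAvg s f x) ((s / (2 * Real.pi)) • gaussAvg s (Δ f) x)) s := by
  set m := Module.finrank ℝ V + 1
  have hb' := hb.continuous_fderiv one_ne_zero
  obtain ⟨M, _, hM⟩ := exists_norm_comp_gaussAvg_le hb' f
  obtain ⟨C, -, hC⟩ :=
    exists_norm_gaussAvg_le_inv_pow (Δ f) m (show 0 ≤ |s| + 1 by positivity)
  refine (hasDerivAt_integral_of_dominated_loc_of_deriv_le (μ := volume) (𝕜 := ℝ)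
    (F := fun r x => b (gaussAvg r f x))
    (F' := fun r x => fderiv ℝ b (gaussAvg r f x) ((r / (2 * Real.pi)) • gaussAvg r (Δ f) x))
    (bound := fun x : V => M * ((|s| + 1) / (2 * Real.pi) * C) * ((1 + ‖x‖) ^ m)⁻¹)
    (Metric.ball_mem_nhds s one_pos)
    (.of_forall fun t => (integrable_comp_gaussAvg hb h0 t f).aestronglyMeasurable)
    (integrable_comp_gaussAvg hb h0 s f) (Continuous.aestronglyMeasurable (by fun_prop))
    (.of_forall fun x t ht => ?_) (integrable_inv_one_add_norm_pow.const_mul _)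
    (.of_forall fun x t _ => (hb.differentiable one_ne_zero _).hasFDerivAt.comp_hasDerivAt t
      (hasDerivAt_gaussAvg t f x))).2
  have h_abs : |t| ≤ |s| + 1 := by
    have h_dist : |t - s| < 1 := by simpa [Real.dist_eq] using ht
    have := abs_add_le (t - s) s
    rw [sub_add_cancel] at this
    linarith
  rw [mul_assoc]
  refine ContinuousLinearMap.le_of_opNorm_le_of_le _ (hM t x) ?_
  rw [norm_smul, Real.norm_eq_abs, abs_div, abs_of_pos Real.two_pi_pos, mul_assoc]
  gcongr
  exact hC t h_abs x

lemma hasDerivAt_integral_comp_gaussAvg {b : F → G} (hb : ContDiff ℝ 2 b) (h0 : b 0 = 0)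
    (f : 𝓢(V, F)) {ι : Type*} [Fintype ι] (e : OrthonormalBasis ι ℝ V) (s : ℝ) :
    HasDerivAt (fun r => ∫ x, b (gaussAvg r f x))
      (-(s / (2 * Real.pi)) • ∑ j, ∫ x, hessAlong b s f (e j) x) s := by
  have hb₁ : ContDiff ℝ 1 b := hb.of_le one_le_two
  convert! hasDerivAt_integral_comp_gaussAvg_laplacian hb₁ h0 f s using 1
  simp only [map_smul, integral_smul, SchwartzMap.laplacian_eq_sum e, gaussAvg_sum, map_sum]
  rw [integral_finsetSum _ fun j _ => integrable_fderiv_comp_gaussAvg hb₁ s f _]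
  simp only [integral_fderiv_comp_gaussAvg_lineDeriv_lineDeriv hb, Finset.sum_neg_distrib,
    neg_smul, smul_neg]

end HeatFlow

section BilinearFlow

variable {V F G H : Type*} [NormedAddCommGroup V] [InnerProductSpace ℝ V]
  [NormedAddCommGroup F] [NormedSpace ℝ F] [NormedAddCommGroup G] [NormedSpace ℝ G]
  [NormedAddCommGroup H] [NormedSpace ℝ H]

lemma fderiv_fderiv_apply_eq_of_hasDerivAt {b : F → G} (hb : ContDiff ℝ 2 b) {z d : F}
    {φ : ℝ → G} {c : G} (hφ : ∀ t : ℝ, HasDerivAt (fun t : ℝ => b (z + t • d)) (φ t) t)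
    (hc : HasDerivAt φ c 0) : fderiv ℝ (fderiv ℝ b) z d d = c := by
  have h_line : ∀ t : ℝ, HasDerivAt (fun t : ℝ => z + t • d) d t := fun t => by
    simpa using ((hasDerivAt_id t).smul_const d).const_add z
  have hφ_eq : φ = fun t => fderiv ℝ b (z + t • d) d := funext fun t =>
    (hφ t).unique ((hb.differentiable two_ne_zero _).hasFDerivAt.comp_hasDerivAt t (h_line t))
  have h_diff : Differentiable ℝ (fderiv ℝ b) :=
    (hb.fderiv_right (m := 1) (by norm_num)).differentiable one_ne_zero
  have h_fderiv : HasDerivAt (fun t : ℝ => fderiv ℝ b (z + t • d))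
      (fderiv ℝ (fderiv ℝ b) (z + (0 : ℝ) • d) d) 0 :=
    (h_diff _).hasFDerivAt.comp_hasDerivAt 0 (h_line 0)
  have h_apply := h_fderiv.clm_apply (hasDerivAt_const 0 d)
  rw [zero_smul, add_zero, map_zero, add_zero] at h_apply
  exact h_apply.unique (hφ_eq ▸ hc)

lemma contDiff_bilin (B : F →L[ℝ] G →L[ℝ] H) {n : WithTop ℕ∞} :
    ContDiff ℝ n fun z : F × G => B z.1 z.2 :=
  B.isBoundedBilinearMap.contDiff

lemma fderiv_fderiv_bilin_apply (B : F →L[ℝ] G →L[ℝ] H) (z d : F × G) :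
    fderiv ℝ (fderiv ℝ fun z : F × G => B z.1 z.2) z d d = (2 : ℝ) • B d.1 d.2 := by
  have h_line : ∀ t : ℝ, HasDerivAt (fun t : ℝ => z + t • d) d t := fun t => by
    simpa using ((hasDerivAt_id t).smul_const d).const_add z
  refine fderiv_fderiv_apply_eq_of_hasDerivAt (contDiff_bilin B)
    (φ := fun t => B (z + t • d).1 d.2 + B d.1 (z + t • d).2) (fun t => ?_) ?_
  · exact (B.isBoundedBilinearMap.hasFDerivAt (z + t • d)).comp_hasDerivAt t (h_line t)
  · have h₁ := (B.flip d.2).hasFDerivAt.comp_hasDerivAt 0 (h_line 0).fst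
    have h₂ := (B d.1).hasFDerivAt.comp_hasDerivAt 0 (h_line 0).snd
    simpa [two_smul] using h₁.fun_add h₂

/-- The Schwartz function `x ↦ (f x, g x)`. -/
def schwartzPair (f : 𝓢(V, F)) (g : 𝓢(V, G)) : 𝓢(V, F × G) :=
  f.postcompCLM (ContinuousLinearMap.inl ℝ F G) + g.postcompCLM (ContinuousLinearMap.inr ℝ F G)

@[simp]
lemma schwartzPair_apply (f : 𝓢(V, F)) (g : 𝓢(V, G)) (x : V) :
    schwartzPair f g x = (f x, g x) := by
  simp [schwartzPair]

lemma lineDerivOp_schwartzPair (f : 𝓢(V, F)) (g : 𝓢(V, G)) (v : V) :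
    ∂_{v} (schwartzPair f g) = schwartzPair (∂_{v} f) (∂_{v} g) := by
  ext1 x
  have h_coe : ⇑(schwartzPair f g) = fun y => (f y, g y) := funext (schwartzPair_apply f g)
  rw [SchwartzMap.lineDerivOp_apply_eq_fderiv, h_coe,
    (f.differentiableAt).fderiv_prodMk g.differentiableAt]
  simp [SchwartzMap.lineDerivOp_apply_eq_fderiv]

variable [FiniteDimensional ℝ V] [MeasurableSpace V] [BorelSpace V]

lemma gaussAvg_schwartzPair [CompleteSpace F] [CompleteSpace G] (s : ℝ) (f : 𝓢(V, F))
    (g : 𝓢(V, G)) (x : V) : gaussAvg s (schwartzPair f g) x = (gaussAvg s f x, gaussAvg s g x) := by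
  simp only [gaussAvg, schwartzPair_apply, Prod.smul_mk]
  exact integral_pair (integrable_gaussWeight_smul s f x) (integrable_gaussWeight_smul s g x)

lemma hessAlong_schwartzPair [CompleteSpace F] [CompleteSpace G] (b : F × G → H) (s : ℝ)
    (f : 𝓢(V, F)) (g : 𝓢(V, G)) (v x : V) :
    hessAlong b s (schwartzPair f g) v x = fderiv ℝ (fderiv ℝ b) (gaussAvg s f x, gaussAvg s g x)
      (gaussAvg s (∂_{v} f) x, gaussAvg s (∂_{v} g) x)
      (gaussAvg s (∂_{v} f) x, gaussAvg s (∂_{v} g) x) := by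
  simp only [hessAlong, lineDerivOp_schwartzPair, gaussAvg_schwartzPair]

lemma integrable_bilin_gaussAvg (B : F →L[ℝ] G →L[ℝ] H) (s : ℝ) (f : 𝓢(V, F)) (g : 𝓢(V, G)) :
    Integrable fun x => B (gaussAvg s f x) (gaussAvg s g x) :=
  B.integrable_of_bilin_of_bdd_left _ (continuous_gaussAvg s f).aestronglyMeasurable
    (.of_forall (norm_gaussAvg_le s f)) (integrable_gaussAvg s g)

lemma integral_bilin_gaussAvg_lineDeriv (B : F →L[ℝ] G →L[ℝ] H) (s : ℝ) (f : 𝓢(V, F))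
    (g : 𝓢(V, G)) (v : V) :
    ∫ x, B (gaussAvg s f x) (gaussAvg s (∂_{v} g) x)
      = -∫ x, B (gaussAvg s (∂_{v} f) x) (gaussAvg s g x) :=
  integral_bilinear_hasLineDerivAt_right_eq_neg_left_of_integrable
    (integrable_bilin_gaussAvg B s _ g) (integrable_bilin_gaussAvg B s f _)
    (integrable_bilin_gaussAvg B s f g) (fun x _ => hasLineDerivAt_gaussAvg s f x v)
    (fun x _ => hasLineDerivAt_gaussAvg s g x v)

lemma hasDerivAt_integral_bilin_gaussAvg [ProperSpace F] [ProperSpace G]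
    (B : F →L[ℝ] G →L[ℝ] H) (f : 𝓢(V, F)) (g : 𝓢(V, G)) {ι : Type*} [Fintype ι]
    (e : OrthonormalBasis ι ℝ V) (s : ℝ) :
    HasDerivAt (fun r => ∫ x, B (gaussAvg r f x) (gaussAvg r g x))
      (-(s / (2 * Real.pi)) • ∑ j,
        (2 : ℝ) • ∫ x, B (gaussAvg s (∂_{e j} f) x) (gaussAvg s (∂_{e j} g) x)) s := by
  simpa only [gaussAvg_schwartzPair, hessAlong_schwartzPair, fderiv_fderiv_bilin_apply,
    integral_smul] using hasDerivAt_integral_comp_gaussAvg (contDiff_bilin B)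
      (by simp) (schwartzPair f g) e s

end BilinearFlow

section RegularizedPower

variable {ε r s p q x y : ℝ}

/-- The regularization `(x² + ε²) ^ (r / 2)` of `|x| ^ r`, smooth for `ε > 0`. -/
def regPow (ε r x : ℝ) : ℝ := (x ^ 2 + ε ^ 2) ^ (r / 2)

/-- The second derivative of `regPow ε r`. -/
def regPow'' (ε r x : ℝ) : ℝ :=
  r * regPow ε (r - 2) x + r * (r - 2) * x ^ 2 * regPow ε (r - 4) x

lemma regPow_pos (hε : 0 < ε) (r x : ℝ) : 0 < regPow ε r x := by
  unfold regPow; positivity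

lemma regPow_two (ε x : ℝ) : regPow ε 2 x = x ^ 2 + ε ^ 2 := by
  simp [regPow]

lemma regPow_mul_regPow (hε : 0 < ε) (r s x : ℝ) :
    regPow ε r x * regPow ε s x = regPow ε (r + s) x := by
  unfold regPow
  rw [← Real.rpow_add (by positivity), add_div]

lemma regPow_neg (ε r x : ℝ) : regPow ε (-r) x = (regPow ε r x)⁻¹ := by
  unfold regPow
  rw [← Real.rpow_neg (by positivity), neg_div]

lemma regPow_rpow (ε r s x : ℝ) : regPow ε r x ^ s = regPow ε (r * s) x := by
  unfold regPow
  rw [← Real.rpow_mul (by positivity)]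
  ring_nf

lemma contDiff_regPow (hε : 0 < ε) (r : ℝ) : ContDiff ℝ 2 (regPow ε r) :=
  ContDiff.rpow_const_of_ne (by fun_prop) fun x => by positivity

lemma hasDerivAt_regPow (hε : 0 < ε) (r x : ℝ) :
    HasDerivAt (regPow ε r) (r * x * regPow ε (r - 2) x) x := by
  have h : HasDerivAt (fun x : ℝ => x ^ 2 + ε ^ 2) (2 * x) x := by
    simpa using (hasDerivAt_pow 2 x).add_const (ε ^ 2)
  convert! h.rpow_const (p := r / 2) (Or.inl (by positivity)) using 1
  rw [regPow, sub_div, div_self two_ne_zero]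
  ring

lemma hasDerivAt_deriv_regPow (hε : 0 < ε) (r x : ℝ) :
    HasDerivAt (fun x => r * x * regPow ε (r - 2) x) (regPow'' ε r x) x := by
  convert! ((hasDerivAt_id x).const_mul r).mul (hasDerivAt_regPow hε (r - 2) x) using 1
  simp only [id, regPow'', sub_sub]
  ring_nf

lemma regPow_zero_right (hε : 0 ≤ ε) (r : ℝ) : regPow ε r 0 = ε ^ r := by
  rw [regPow, zero_pow two_ne_zero, zero_add, ← Real.rpow_natCast_mul hε]
  ring_nf

lemma sq_rpow_half (x r : ℝ) : (x ^ 2) ^ (r / 2) = |x| ^ r := by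
  rw [← sq_abs, ← Real.rpow_natCast_mul (abs_nonneg x)]
  ring_nf

lemma regPow_zero_right_le (hr : 0 ≤ r) (x : ℝ) : regPow ε r 0 ≤ regPow ε r x := by
  unfold regPow
  exact Real.rpow_le_rpow (by positivity) (by linarith [sq_nonneg x]) (by positivity)

lemma abs_rpow_le_regPow (hr : 0 ≤ r) (ε x : ℝ) : |x| ^ r ≤ regPow ε r x := by
  rw [← sq_rpow_half, regPow]
  gcongr
  linarith [sq_nonneg ε]

lemma regPow_sub_le_of_le_two (hr : 0 ≤ r) (hr2 : r ≤ 2) (ε x : ℝ) :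
    regPow ε r x - regPow ε r 0 ≤ |x| ^ r := by
  have h := Real.rpow_add_le_add_rpow (sq_nonneg x) (sq_nonneg ε) (p := r / 2) (by positivity)
    (by linarith)
  rw [sq_rpow_half x] at h
  simpa [regPow] using h

lemma regPow_le_abs_add_rpow (hε : 0 ≤ ε) (hr : 0 ≤ r) (x : ℝ) :
    regPow ε r x ≤ (|x| + ε) ^ r := by
  rw [← abs_of_nonneg (by positivity : 0 ≤ |x| + ε), ← sq_rpow_half, regPow]
  gcongr
  nlinarith [sq_abs x, mul_nonneg (abs_nonneg x) hε]

lemma add_rpow_le_of_le (hx : 0 ≤ x) (hxε : x ≤ ε) (hε : 0 < ε) (hr : 1 ≤ r) :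
    (x + ε) ^ r ≤ ε ^ r + x / ε * (2 ^ r * ε ^ r) := by
  have h := (convexOn_rpow hr).2 (Set.mem_Ici.2 hε.le) (Set.mem_Ici.2 (by positivity : 0 ≤ 2 * ε))
    (by rwa [sub_nonneg, div_le_one hε] : 0 ≤ 1 - x / ε) (by positivity : 0 ≤ x / ε) (by ring)
  have hcomb : (1 - x / ε) * ε + x / ε * (2 * ε) = x + ε := by
    field_simp
    ring
  simp only [smul_eq_mul, hcomb, Real.mul_rpow zero_le_two hε.le] at h
  have : 0 ≤ x / ε * ε ^ r := by positivity
  linarith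

lemma regPow_sub_le_of_two_le (hε : 0 < ε) (hε1 : ε ≤ 1) (hr : 2 ≤ r) (x : ℝ) :
    regPow ε r x - regPow ε r 0 ≤ 2 ^ r * |x| ^ r + 2 ^ r * ε * |x| := by
  have hle := regPow_le_abs_add_rpow hε.le (by linarith : 0 ≤ r) x
  rw [regPow_zero_right hε.le]
  rcases le_total ε |x| with h | h
  · have h2 : (|x| + ε) ^ r ≤ 2 ^ r * |x| ^ r := by
      rw [← Real.mul_rpow zero_le_two (abs_nonneg x)]
      gcongr
      linarith
    have : 0 ≤ 2 ^ r * ε * |x| := by positivity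
    have : 0 ≤ ε ^ r := by positivity
    linarith
  · have hconv := add_rpow_le_of_le (abs_nonneg x) h hε (by linarith : 1 ≤ r)
    have hεr : ε ^ r ≤ ε ^ 2 := by
      simpa using Real.rpow_le_rpow_of_exponent_ge hε hε1 hr
    have hlin : |x| / ε * (2 ^ r * ε ^ r) ≤ 2 ^ r * ε * |x| :=
      calc |x| / ε * (2 ^ r * ε ^ r) ≤ |x| / ε * (2 ^ r * ε ^ 2) := by gcongr
        _ = 2 ^ r * ε * |x| := by field_simp
    have : 0 ≤ 2 ^ r * |x| ^ r := by positivity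
    linarith

lemma le_regPow''_of_two_le (hε : 0 < ε) (hr : 2 ≤ r) (x : ℝ) :
    r * regPow ε (r - 2) x ≤ regPow'' ε r x := by
  have := regPow_pos hε (r - 4) x
  have : 0 ≤ r - 2 := by linarith
  exact le_add_of_nonneg_right (by positivity)

lemma le_regPow''_of_le_two (hε : 0 < ε) (hr : 0 ≤ r) (hr2 : r ≤ 2) (x : ℝ) :
    r * (r - 1) * regPow ε (r - 2) x ≤ regPow'' ε r x := by
  have hmul : regPow ε (r - 2) x = (x ^ 2 + ε ^ 2) * regPow ε (r - 4) x := by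
    rw [← regPow_two, regPow_mul_regPow hε]
    ring_nf
  have : 0 ≤ r * (2 - r) * (ε ^ 2 * regPow ε (r - 4) x) :=
    mul_nonneg (mul_nonneg hr (by linarith))
      (mul_nonneg (sq_nonneg ε) (regPow_pos hε _ x).le)
  rw [regPow'', hmul]
  linarith

end RegularizedPower

section MixedTerm

variable {ε q τ : ℝ}

/-- The function `√(x² Y + Y ^ q)` with `Y = y² + ε²`, comparable to `|x| |y| + |y| ^ q`. -/
def mixTerm (ε q x y : ℝ) : ℝ :=
  √((y ^ 2 + ε ^ 2) * (x ^ 2 + regPow ε (2 * q - 2) y))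

/-- The partial derivative of `mixTerm ε q` in the first variable. -/
def mixTerm₁ (ε q x y : ℝ) : ℝ := x * (y ^ 2 + ε ^ 2) / mixTerm ε q x y

/-- The partial derivative of `mixTerm ε q` in the second variable. -/
def mixTerm₂ (ε q x y : ℝ) : ℝ :=
  y * (x ^ 2 + q * regPow ε (2 * q - 2) y) / mixTerm ε q x y

/-- The second partial derivative of `mixTerm ε q` in the first variable. -/
def mixTerm₁₁ (ε q x y : ℝ) : ℝ :=
  (y ^ 2 + ε ^ 2) ^ 2 * regPow ε (2 * q - 2) y / mixTerm ε q x y ^ 3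

/-- The mixed second partial derivative of `mixTerm ε q`. -/
def mixTerm₁₂ (ε q x y : ℝ) : ℝ :=
  x * y * ((y ^ 2 + ε ^ 2) * (x ^ 2 + (2 - q) * regPow ε (2 * q - 2) y)) / mixTerm ε q x y ^ 3

/-- The second partial derivative of `mixTerm ε q` in the second variable. -/
def mixTerm₂₂ (ε q x y : ℝ) : ℝ :=
  (ε ^ 2 * ((x ^ 2 + q * regPow ε (2 * q - 2) y) * (x ^ 2 + regPow ε (2 * q - 2) y))
    + y ^ 2 * ((q - 1) * regPow ε (2 * q - 2) y
      * ((2 * q - 1) * x ^ 2 + q * regPow ε (2 * q - 2) y))) / mixTerm ε q x y ^ 3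

lemma mixTerm_pos (hε : 0 < ε) (q x y : ℝ) : 0 < mixTerm ε q x y := by
  have := regPow_pos hε (2 * q - 2) y
  unfold mixTerm; positivity

lemma mixTerm_sq (hε : 0 < ε) (q x y : ℝ) :
    mixTerm ε q x y ^ 2 = (y ^ 2 + ε ^ 2) * (x ^ 2 + regPow ε (2 * q - 2) y) := by
  have := regPow_pos hε (2 * q - 2) y
  exact Real.sq_sqrt (by positivity)

lemma regPow_two_mul_sub_two (hε : 0 < ε) (q y : ℝ) :
    regPow ε (2 * q - 2) y = (y ^ 2 + ε ^ 2) * regPow ε (2 * q - 2 - 2) y := by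
  rw [← regPow_two, regPow_mul_regPow hε]
  ring_nf

lemma contDiff_mixTerm (hε : 0 < ε) (q : ℝ) :
    ContDiff ℝ 2 fun z : ℝ × ℝ => mixTerm ε q z.1 z.2 := by
  have hpow : ContDiff ℝ 2 fun z : ℝ × ℝ => regPow ε (2 * q - 2) z.2 :=
    (contDiff_regPow hε _).comp contDiff_snd
  refine ContDiff.sqrt (by fun_prop) fun z => ?_
  have := regPow_pos hε (2 * q - 2) z.2
  positivity

section ChainRule

variable {F G : ℝ → ℝ} {F' G' t : ℝ}

lemma hasDerivAt_mixTerm (hε : 0 < ε) (q : ℝ) (hF : HasDerivAt F F' t) (hG : HasDerivAt G G' t) :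
    HasDerivAt (fun r => mixTerm ε q (F r) (G r))
      (mixTerm₁ ε q (F t) (G t) * F' + mixTerm₂ ε q (F t) (G t) * G') t := by
  have hQ := regPow_pos hε (2 * q - 2) (G t)
  have hY : HasDerivAt (fun r => G r ^ 2 + ε ^ 2) (2 * G t * G') t := by
    simpa using (hG.fun_pow 2).add_const (ε ^ 2)
  have hX : HasDerivAt (fun r => F r ^ 2) (2 * F t * F') t := by simpa using hF.fun_pow 2
  have h := (hY.mul (hX.add ((hasDerivAt_regPow hε (2 * q - 2) (G t)).comp t hG))).sqrt
    (by simp only [Pi.mul_apply, Pi.add_apply, Function.comp_apply]; positivity)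
  convert! h using 1
  simp only [Pi.mul_apply, Pi.add_apply, Function.comp_apply]
  change _ = _ / (2 * mixTerm ε q (F t) (G t))
  unfold mixTerm₁ mixTerm₂
  have hm := mixTerm_pos hε q (F t) (G t)
  have hQY := regPow_two_mul_sub_two hε q (G t)
  generalize regPow ε (2 * q - 2) (G t) = Q at hQY ⊢
  generalize regPow ε (2 * q - 2 - 2) (G t) = P at hQY ⊢
  field_simp
  linear_combination (q - 1) * G t * G' * hQY

lemma hasDerivAt_mixTerm₁ (hε : 0 < ε) (q : ℝ) (hF : HasDerivAt F F' t)
    (hG : HasDerivAt G G' t) :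
    HasDerivAt (fun r => mixTerm₁ ε q (F r) (G r))
      (mixTerm₁₁ ε q (F t) (G t) * F' + mixTerm₁₂ ε q (F t) (G t) * G') t := by
  have hm := mixTerm_pos hε q (F t) (G t)
  have hY : HasDerivAt (fun r => G r ^ 2 + ε ^ 2) (2 * G t * G') t := by
    simpa using (hG.fun_pow 2).add_const (ε ^ 2)
  convert! (hF.mul hY).div (hasDerivAt_mixTerm hε q hF hG) hm.ne' using 1
  have hs := mixTerm_sq hε q (F t) (G t)
  simp only [Pi.mul_apply]
  unfold mixTerm₁ mixTerm₂ mixTerm₁₁ mixTerm₁₂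
  generalize regPow ε (2 * q - 2) (G t) = Q at hs ⊢
  field_simp
  linear_combination (-(F' * (G t ^ 2 + ε ^ 2)) - 2 * F t * G t * G') * hs

lemma hasDerivAt_mixTerm₂ (hε : 0 < ε) (q : ℝ) (hF : HasDerivAt F F' t)
    (hG : HasDerivAt G G' t) :
    HasDerivAt (fun r => mixTerm₂ ε q (F r) (G r))
      (mixTerm₁₂ ε q (F t) (G t) * F' + mixTerm₂₂ ε q (F t) (G t) * G') t := by
  have hm := mixTerm_pos hε q (F t) (G t)
  have hX : HasDerivAt (fun r => F r ^ 2) (2 * F t * F') t := by simpa using hF.fun_pow 2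
  have hQ := ((hasDerivAt_regPow hε (2 * q - 2) (G t)).comp t hG).const_mul q
  convert! (hG.mul (hX.add hQ)).div (hasDerivAt_mixTerm hε q hF hG) hm.ne' using 1
  have hs := mixTerm_sq hε q (F t) (G t)
  have hQY := regPow_two_mul_sub_two hε q (G t)
  simp only [Pi.mul_apply, Pi.add_apply, Function.comp_apply]
  unfold mixTerm₁ mixTerm₂ mixTerm₁₂ mixTerm₂₂
  generalize regPow ε (2 * q - 2) (G t) = Q at hs hQY ⊢
  generalize regPow ε (2 * q - 2 - 2) (G t) = P at hs hQY ⊢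
  field_simp
  linear_combination
    (-(G' * (F t ^ 2 + q * Q)) - G t * (2 * F t * F' + q * ((2 * q - 2) * G t * P * G'))) * hs
      + (G t ^ 2 * G' * q * (2 * q - 2) * (F t ^ 2 + Q)) * hQY

end ChainRule

lemma mixTerm₁₁_nonneg (hε : 0 < ε) (q x y : ℝ) : 0 ≤ mixTerm₁₁ ε q x y := by
  have := mixTerm_pos hε q x y
  have := regPow_pos hε (2 * q - 2) y
  unfold mixTerm₁₁
  positivity

lemma mixTerm₂₂_nonneg (hε : 0 < ε) (hq : 1 < q) (x y : ℝ) : 0 ≤ mixTerm₂₂ ε q x y := by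
  have := mixTerm_pos hε q x y
  have := regPow_pos hε (2 * q - 2) y
  have : 0 < q - 1 := by linarith
  have : 0 < 2 * q - 1 := by linarith
  unfold mixTerm₂₂
  positivity

lemma abs_mul_le_mixTerm (hε : 0 < ε) (q x y : ℝ) : |x * y| ≤ mixTerm ε q x y := by
  have hQ := regPow_pos hε (2 * q - 2) y
  refine abs_le_of_sq_le_sq ?_ (mixTerm_pos hε q x y).le
  rw [mixTerm_sq hε]
  have : 0 ≤ x ^ 2 * ε ^ 2 + (y ^ 2 + ε ^ 2) * regPow ε (2 * q - 2) y := by positivity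
  linarith

lemma abs_mixTerm₁₂_le (hε : 0 < ε) (hq : 1 ≤ q) (hq2 : q ≤ 2) (x y : ℝ) :
    |mixTerm₁₂ ε q x y| ≤ 1 := by
  have hm := mixTerm_pos hε q x y
  have hQ := regPow_pos hε (2 * q - 2) y
  set Q := regPow ε (2 * q - 2) y with hQdef
  set Y := y ^ 2 + ε ^ 2 with hYdef
  have : 0 < Y := by positivity
  have : 0 ≤ 2 - q := by linarith
  have hsq : Y * (x ^ 2 + (2 - q) * Q) ≤ mixTerm ε q x y ^ 2 := by
    rw [mixTerm_sq hε, ← hQdef, ← hYdef]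
    gcongr
    nlinarith
  unfold mixTerm₁₂
  rw [← hQdef, ← hYdef, abs_div, abs_mul, abs_of_pos (pow_pos hm 3),
    abs_of_nonneg (by positivity : 0 ≤ Y * (x ^ 2 + (2 - q) * Q)), div_le_one (pow_pos hm 3)]
  calc |x * y| * (Y * (x ^ 2 + (2 - q) * Q)) ≤ mixTerm ε q x y * mixTerm ε q x y ^ 2 := by
        gcongr
        exact abs_mul_le_mixTerm hε q x y
    _ = mixTerm ε q x y ^ 3 := by ring

lemma two_mul_regPow_le_mixTerm₁₁ (hε : 0 < ε) {x y : ℝ}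
    (hx : x ^ 2 ≤ regPow ε (2 * q - 2) y) :
    2 * regPow ε (2 - q) y ≤ 8 * mixTerm₁₁ ε q x y := by
  have hm := mixTerm_pos hε q x y
  have hτ := regPow_pos hε (2 - q) y
  have hQ := regPow_pos hε (2 * q - 2) y
  have hτQ : regPow ε (2 - q) y ^ 2 * regPow ε (2 * q - 2) y = y ^ 2 + ε ^ 2 := by
    rw [sq, regPow_mul_regPow hε, regPow_mul_regPow hε, ← regPow_two]
    ring_nf
  unfold mixTerm₁₁
  have hs := mixTerm_sq hε q x y
  set τ := regPow ε (2 - q) y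
  set Q := regPow ε (2 * q - 2) y
  set m := mixTerm ε q x y
  set Y := y ^ 2 + ε ^ 2
  have hY : 0 < Y := by positivity
  have hτm : τ * m ≤ 3 / 2 * Y := by
    refine le_of_sq_le_sq ?_ (by positivity)
    calc (τ * m) ^ 2 = τ ^ 2 * (Y * (x ^ 2 + Q)) := by rw [mul_pow, hs]
      _ ≤ τ ^ 2 * (Y * (Q + Q)) := by gcongr
      _ = 2 * Y ^ 2 := by linear_combination 2 * Y * hτQ
      _ ≤ (3 / 2 * Y) ^ 2 := by nlinarith [sq_nonneg Y]
  rw [← mul_div_assoc, le_div_iff₀ (by positivity)]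
  refine le_of_mul_le_mul_left (a := τ ^ 2) ?_ (by positivity)
  calc τ ^ 2 * (2 * τ * m ^ 3) = 2 * (τ * m) ^ 3 := by ring
    _ ≤ 2 * (3 / 2 * Y) ^ 3 := by gcongr
    _ ≤ 8 * Y ^ 3 := by nlinarith [pow_pos hY 3]
    _ = τ ^ 2 * (8 * (Y ^ 2 * Q)) := by linear_combination -8 * Y ^ 2 * hτQ

lemma mixTerm_sq_eq_add (hε : 0 < ε) (q x y : ℝ) :
    mixTerm ε q x y ^ 2 = (y ^ 2 + ε ^ 2) * x ^ 2 + regPow ε q y ^ 2 := by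
  rw [mixTerm_sq hε, mul_add, ← regPow_two, regPow_mul_regPow hε, sq (regPow ε q y),
    regPow_mul_regPow hε]
  ring_nf

lemma regPow_le_mixTerm (hε : 0 < ε) (q x y : ℝ) : regPow ε q y ≤ mixTerm ε q x y := by
  refine le_of_sq_le_sq ?_ (mixTerm_pos hε q x y).le
  rw [mixTerm_sq_eq_add hε]
  exact le_add_of_nonneg_left (by positivity)

lemma mixTerm_le (hε : 0 < ε) (q x y : ℝ) :
    mixTerm ε q x y ≤ |x| * (|y| + ε) + regPow ε q y := by
  have hpow := regPow_pos hε q y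
  refine le_of_sq_le_sq ?_ (by positivity)
  have hcross : 0 ≤ x ^ 2 * (2 * |y| * ε) + 2 * (|x| * (|y| + ε)) * regPow ε q y := by positivity
  rw [mixTerm_sq_eq_add hε, add_sq, mul_pow, sq_abs, add_sq, sq_abs]
  linarith

lemma mixTerm_zero_zero (hε : 0 < ε) (q : ℝ) : mixTerm ε q 0 0 = regPow ε q 0 :=
  le_antisymm (by simpa using mixTerm_le hε q 0 0) (regPow_le_mixTerm hε q 0 0)

end MixedTerm

section Bellman

variable {p q C K ε : ℝ}

/-- The Bellman functions of Nazarov–Treil type: `b` is nonnegative, of size `|x| ^ p + |y| ^ q` up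
to an error of order `ε`, and at each point its Hessian dominates a quadratic form
`τ d₁² + τ⁻¹ d₂²`, hence also `2 |d₁ d₂|`. -/
structure IsBellman (p q C ε : ℝ) (b : ℝ × ℝ → ℝ) : Prop where
  contDiff : ContDiff ℝ 2 b
  zero : b 0 = 0
  nonneg : ∀ z, 0 ≤ b z
  hess : ∀ z, ∃ τ > 0, ∀ d : ℝ × ℝ,
    τ * d.1 ^ 2 + τ⁻¹ * d.2 ^ 2 ≤ fderiv ℝ (fderiv ℝ b) z d d
  le : ∀ z, b z ≤ C * (|z.1| ^ p + |z.2| ^ q) + C * ε * (|z.1| + |z.2|)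

lemma fderiv_fderiv_comp_swap {b : ℝ × ℝ → ℝ} (hb : ContDiff ℝ 2 b) (z d : ℝ × ℝ) :
    fderiv ℝ (fderiv ℝ (b ∘ Prod.swap)) z d d
      = fderiv ℝ (fderiv ℝ b) z.swap d.swap d.swap := by
  have hdiff : Differentiable ℝ b := hb.differentiable two_ne_zero
  have hdiff' : Differentiable ℝ (fderiv ℝ b) :=
    (hb.fderiv_right (m := 1) le_rfl).differentiable one_ne_zero
  have hline (t : ℝ) : HasDerivAt (fun t : ℝ => (z + t • d).swap) d.swap t :=
    (((hasDerivAt_id t).smul_const d.2).const_add z.2 |>.prodMk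
      (((hasDerivAt_id t).smul_const d.1).const_add z.1)).congr_deriv (by simp [Prod.swap])
  refine fderiv_fderiv_apply_eq_of_hasDerivAt (hb.comp (contDiff_snd.prodMk contDiff_fst))
    (fun t => (hdiff _).hasFDerivAt.comp_hasDerivAt t (hline t)) ?_
  have h := (hdiff' (z + (0 : ℝ) • d).swap).hasFDerivAt.comp_hasDerivAt 0 (hline 0)
  convert! h.clm_apply (hasDerivAt_const 0 d.swap) using 1
  simp

lemma IsBellman.swap {b : ℝ × ℝ → ℝ} (h : IsBellman p q C ε b) :
    IsBellman q p C ε (b ∘ Prod.swap) where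
  contDiff := h.contDiff.comp (contDiff_snd.prodMk contDiff_fst)
  zero := h.zero
  nonneg z := h.nonneg z.swap
  hess z := by
    obtain ⟨τ, hτ, hess⟩ := h.hess z.swap
    refine ⟨τ⁻¹, inv_pos.2 hτ, fun d => ?_⟩
    rw [fderiv_fderiv_comp_swap h.contDiff, inv_inv, add_comm]
    exact hess d.swap
  le z := by
    rw [add_comm (|z.1| ^ q), add_comm |z.1|]
    exact h.le z.swap

/-- The candidate `K (|x| ^ p + |y| ^ q) + 8 (|x| |y| + |y| ^ q)` for the Bellman function, with
each term regularized at scale `ε` and normalized to vanish at the origin. -/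
def bellman (K p q ε : ℝ) (z : ℝ × ℝ) : ℝ :=
  K * (regPow ε p z.1 - regPow ε p 0) + K * (regPow ε q z.2 - regPow ε q 0)
    + 8 * (mixTerm ε q z.1 z.2 - mixTerm ε q 0 0)

lemma contDiff_bellman (hε : 0 < ε) (K p q : ℝ) : ContDiff ℝ 2 (bellman K p q ε) := by
  have hp : ContDiff ℝ 2 fun z : ℝ × ℝ => regPow ε p z.1 := (contDiff_regPow hε p).comp contDiff_fst
  have hq : ContDiff ℝ 2 fun z : ℝ × ℝ => regPow ε q z.2 := (contDiff_regPow hε q).comp contDiff_snd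
  have hmix := contDiff_mixTerm hε q
  unfold bellman
  fun_prop

lemma bellman_zero (K p q ε : ℝ) : bellman K p q ε 0 = 0 := by
  simp [bellman]

lemma bellman_nonneg (hε : 0 < ε) (hK : 0 ≤ K) (hp : 0 ≤ p) (hq : 0 ≤ q) (z : ℝ × ℝ) :
    0 ≤ bellman K p q ε z := by
  have hx := sub_nonneg.2 (regPow_zero_right_le hp z.1 (ε := ε))
  have hy := sub_nonneg.2 (regPow_zero_right_le hq z.2 (ε := ε))
  have hmix : 0 ≤ mixTerm ε q z.1 z.2 - mixTerm ε q 0 0 := by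
    rw [mixTerm_zero_zero hε]
    exact hy.trans (sub_le_sub_right (regPow_le_mixTerm hε q _ _) _)
  unfold bellman
  positivity

lemma fderiv_fderiv_bellman_apply (hε : 0 < ε) (K p q : ℝ) (z d : ℝ × ℝ) :
    fderiv ℝ (fderiv ℝ (bellman K p q ε)) z d d
      = (K * regPow'' ε p z.1 + 8 * mixTerm₁₁ ε q z.1 z.2) * d.1 ^ 2
        + 2 * (8 * mixTerm₁₂ ε q z.1 z.2) * d.1 * d.2
        + (K * regPow'' ε q z.2 + 8 * mixTerm₂₂ ε q z.1 z.2) * d.2 ^ 2 := by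
  have hF (t : ℝ) : HasDerivAt (fun t => z.1 + t * d.1) d.1 t := by
    simpa using ((hasDerivAt_id t).mul_const d.1).const_add z.1
  have hG (t : ℝ) : HasDerivAt (fun t => z.2 + t * d.2) d.2 t := by
    simpa using ((hasDerivAt_id t).mul_const d.2).const_add z.2
  refine fderiv_fderiv_apply_eq_of_hasDerivAt (contDiff_bellman hε K p q)
    (fun t => (((((hasDerivAt_regPow hε p _).comp t (hF t)).sub_const _).const_mul K).add
      ((((hasDerivAt_regPow hε q _).comp t (hG t)).sub_const _).const_mul K)).add
        (((hasDerivAt_mixTerm hε q (hF t) (hG t)).sub_const _).const_mul 8)) ?_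
  convert! (((((hasDerivAt_deriv_regPow hε p _).comp 0 (hF 0)).mul_const d.1).const_mul K).add
    ((((hasDerivAt_deriv_regPow hε q _).comp 0 (hG 0)).mul_const d.2).const_mul K)).add
      ((((hasDerivAt_mixTerm₁ hε q (hF 0) (hG 0)).mul_const d.1).add
        ((hasDerivAt_mixTerm₂ hε q (hF 0) (hG 0)).mul_const d.2)).const_mul 8) using 1
  simp only [zero_mul, add_zero]
  ring

lemma quadratic_form_ge {α β γ τ d₁ d₂ : ℝ} (hτ : 0 < τ) (hα : 2 * τ ≤ α) (hβ : |β| ≤ 8)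
    (hγ : 65 * τ⁻¹ ≤ γ) :
    τ * d₁ ^ 2 + τ⁻¹ * d₂ ^ 2 ≤ α * d₁ ^ 2 + 2 * β * d₁ * d₂ + γ * d₂ ^ 2 := by
  have hα' : 2 * τ * d₁ ^ 2 ≤ α * d₁ ^ 2 := by gcongr
  have hγ' : 65 * τ⁻¹ * d₂ ^ 2 ≤ γ * d₂ ^ 2 := by gcongr
  have hβ' : β ^ 2 * (τ⁻¹ * d₂ ^ 2) ≤ 64 * (τ⁻¹ * d₂ ^ 2) := by
    gcongr
    nlinarith [sq_abs β, abs_nonneg β]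
  have hsq : 0 ≤ τ * d₁ ^ 2 + 2 * β * d₁ * d₂ + β ^ 2 * (τ⁻¹ * d₂ ^ 2) :=
    calc 0 ≤ τ⁻¹ * (τ * d₁ + β * d₂) ^ 2 := by positivity
      _ = τ * d₁ ^ 2 + 2 * β * d₁ * d₂ + β ^ 2 * (τ⁻¹ * d₂ ^ 2) := by
        field_simp
        ring
  linarith

lemma regPow_le_regPow_of_regPow_le_sq (hpq : p.HolderConjugate q) (hp : 2 ≤ p) (hε : 0 < ε)
    {x y : ℝ} (h : regPow ε (2 * q - 2) y ≤ x ^ 2) :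
    regPow ε (2 - q) y ≤ regPow ε (p - 2) x := by
  have hmul : (p - 1) * (q - 1) = 1 := by linear_combination hpq.sub_one_mul_conj
  have hexp : 2 - q = (2 * q - 2) * ((p - 2) / 2) := by linear_combination -hmul
  have hp2 : 0 ≤ p - 2 := by linarith
  calc regPow ε (2 - q) y = regPow ε (2 * q - 2) y ^ ((p - 2) / 2) := by rw [regPow_rpow, ← hexp]
    _ ≤ (x ^ 2) ^ ((p - 2) / 2) :=
        Real.rpow_le_rpow (regPow_pos hε _ _).le h (by positivity)
    _ ≤ regPow ε (p - 2) x := by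
        rw [sq_rpow_half]
        exact abs_rpow_le_regPow hp2 ε x

lemma two_mul_regPow_le_bellman₁₁ (hpq : p.HolderConjugate q) (hp : 2 ≤ p) (hK : 1 ≤ K)
    (hε : 0 < ε) (x y : ℝ) :
    2 * regPow ε (2 - q) y ≤ K * regPow'' ε p x + 8 * mixTerm₁₁ ε q x y := by
  have hpow := regPow_pos hε (p - 2) x
  have hx : 2 * regPow ε (p - 2) x ≤ regPow'' ε p x :=
    (mul_le_mul_of_nonneg_right hp hpow.le).trans (le_regPow''_of_two_le hε hp x)
  have hKx : regPow'' ε p x ≤ K * regPow'' ε p x := le_mul_of_one_le_left (by linarith) hK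
  rcases le_total (x ^ 2) (regPow ε (2 * q - 2) y) with h | h
  · linarith [two_mul_regPow_le_mixTerm₁₁ hε h]
  · linarith [regPow_le_regPow_of_regPow_le_sq hpq hp hε h, mixTerm₁₁_nonneg hε q x y]

lemma mul_regPow_le_bellman₂₂ (hq : 1 < q) (hq2 : q ≤ 2) (hK : 65 ≤ K * (q * (q - 1)))
    (hε : 0 < ε) (x y : ℝ) :
    65 * (regPow ε (2 - q) y)⁻¹ ≤ K * regPow'' ε q y + 8 * mixTerm₂₂ ε q x y := by
  have hpow := regPow_pos hε (q - 2) y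
  have hK0 : 0 ≤ K := by
    have : 0 < q * (q - 1) := mul_pos (by linarith) (by linarith)
    exact (pos_of_mul_pos_left (by linarith) this.le).le
  calc 65 * (regPow ε (2 - q) y)⁻¹ = 65 * regPow ε (q - 2) y := by rw [← regPow_neg, neg_sub]
    _ ≤ K * (q * (q - 1)) * regPow ε (q - 2) y := by gcongr
    _ = K * (q * (q - 1) * regPow ε (q - 2) y) := by ring
    _ ≤ K * regPow'' ε q y := by
        gcongr
        exact le_regPow''_of_le_two hε (by linarith) hq2 y
    _ ≤ K * regPow'' ε q y + 8 * mixTerm₂₂ ε q x y :=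
        le_add_of_nonneg_right (mul_nonneg (by norm_num) (mixTerm₂₂_nonneg hε hq x y))

lemma bellman_le (hpq : p.HolderConjugate q) (hp : 2 ≤ p) (hq2 : q ≤ 2) (hK : 0 ≤ K)
    (hε : 0 < ε) (hε1 : ε ≤ 1) (z : ℝ × ℝ) :
    bellman K p q ε z ≤ (K * 2 ^ p + K + 16) * (|z.1| ^ p + |z.2| ^ q)
      + (K * 2 ^ p + K + 16) * ε * (|z.1| + |z.2|) := by
  obtain ⟨x, y⟩ := z
  have hq := hpq.symm.lt
  have hxK : K * (regPow ε p x - regPow ε p 0) ≤ K * (2 ^ p * |x| ^ p + 2 ^ p * ε * |x|) := by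
    gcongr
    exact regPow_sub_le_of_two_le hε hε1 hp x
  have hy := regPow_sub_le_of_le_two (by linarith) hq2 ε y
  have hyK : K * (regPow ε q y - regPow ε q 0) ≤ K * |y| ^ q := by gcongr
  have hmix := mixTerm_le hε q x y
  have hxp : 0 ≤ |x| ^ p := by positivity
  have hyq : 0 ≤ |y| ^ q := by positivity
  have hyoung : |x| * |y| ≤ |x| ^ p + |y| ^ q :=
    (Real.young_inequality_of_nonneg (abs_nonneg x) (abs_nonneg y) hpq).trans
      (add_le_add (div_le_self hxp (by linarith)) (div_le_self hyq hq.le))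
  have hrest : 0 ≤ K * |x| ^ p + K * 2 ^ p * |y| ^ q + 8 * |x| ^ p + (K + 8) * (ε * |x|)
      + (K * 2 ^ p + K + 16) * (ε * |y|) := by positivity
  simp only [bellman, mixTerm_zero_zero hε]
  linarith

lemma isBellman_bellman (hpq : p.HolderConjugate q) (hp : 2 ≤ p) (hq2 : q ≤ 2) (hK1 : 1 ≤ K)
    (hK : 65 ≤ K * (q * (q - 1))) (hε : 0 < ε) (hε1 : ε ≤ 1) :
    IsBellman p q (K * 2 ^ p + K + 16) ε (bellman K p q ε) where
  contDiff := contDiff_bellman hε K p q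
  zero := bellman_zero K p q ε
  nonneg := bellman_nonneg hε (by linarith) hpq.nonneg hpq.symm.nonneg
  hess z := by
    refine ⟨regPow ε (2 - q) z.2, regPow_pos hε _ _, fun d => ?_⟩
    rw [fderiv_fderiv_bellman_apply hε]
    refine quadratic_form_ge (regPow_pos hε _ _)
      (two_mul_regPow_le_bellman₁₁ hpq hp hK1 hε _ _) ?_
      (mul_regPow_le_bellman₂₂ hpq.symm.lt hq2 hK hε _ _)
    rw [abs_mul, abs_of_pos (by norm_num : (0 : ℝ) < 8)]
    linarith [abs_mixTerm₁₂_le hε hpq.symm.lt.le hq2 z.1 z.2]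
  le := bellman_le hpq hp hq2 (by linarith) hε hε1

lemma le_two_of_holderConjugate (hpq : p.HolderConjugate q) (hp : 2 ≤ p) : q ≤ 2 := by
  have := hpq.sub_one_mul_conj
  have := hpq.symm.pos
  nlinarith

lemma exists_isBellman (hpq : p.HolderConjugate q) :
    ∃ C, 0 < C ∧ ∀ ε, 0 < ε → ε ≤ 1 → ∃ b, IsBellman p q C ε b := by
  wlog hp : 2 ≤ p generalizing p q
  · have hq : 2 ≤ q := by
      by_contra! hq
      have := hpq.inv_add_inv_eq_one
      have := inv_strictAnti₀ hpq.pos (not_le.1 hp)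
      have := inv_strictAnti₀ hpq.symm.pos hq
      linarith
    obtain ⟨C, hC, h⟩ := this hpq.symm hq
    exact ⟨C, hC, fun ε hε hε1 => (h ε hε hε1).imp' _ fun _ hb => hb.swap⟩
  have hq := hpq.symm.lt
  have hq2 := le_two_of_holderConjugate hpq hp
  have hqq : 0 < q * (q - 1) := mul_pos (by linarith) (by linarith)
  have hK : 65 / (q * (q - 1)) * (q * (q - 1)) = 65 := div_mul_cancel₀ _ hqq.ne'
  have hK1 : 1 ≤ 65 / (q * (q - 1)) := by
    rw [one_le_div hqq]
    nlinarith
  exact ⟨_, by positivity, fun ε hε hε1 => ⟨_, isBellman_bellman hpq hp hq2 hK1 hK.ge hε hε1⟩⟩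

end Bellman

section RieszBellman

lemma two_mul_le_sum_of_quadratic_le {ι : Type*} [Fintype ι] {τ : ℝ} (hτ : 0 < τ) {a d h : ι → ℝ}
    (hess : ∀ j, τ * a j ^ 2 + τ⁻¹ * d j ^ 2 ≤ h j) (k i : ι) : 2 * (a k * d i) ≤ ∑ j, h j := by
  have ha : τ * a k ^ 2 ≤ ∑ j, τ * a j ^ 2 :=
    Finset.single_le_sum (f := fun j => τ * a j ^ 2) (fun j _ => by positivity) (Finset.mem_univ k)
  have hd : τ⁻¹ * d i ^ 2 ≤ ∑ j, τ⁻¹ * d j ^ 2 :=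
    Finset.single_le_sum (f := fun j => τ⁻¹ * d j ^ 2) (fun j _ => by positivity)
      (Finset.mem_univ i)
  have hsq : 0 ≤ τ * a k ^ 2 - 2 * (a k * d i) + τ⁻¹ * d i ^ 2 :=
    calc 0 ≤ τ⁻¹ * (τ * a k - d i) ^ 2 := by positivity
      _ = τ * a k ^ 2 - 2 * (a k * d i) + τ⁻¹ * d i ^ 2 := by
        field_simp
        ring
  have hsum := Finset.sum_le_sum fun j (_ : j ∈ Finset.univ) => hess j
  rw [Finset.sum_add_distrib] at hsum
  linarith

variable {V F : Type*} [NormedAddCommGroup V] [NormedAddCommGroup F] [NormedSpace ℝ F]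

lemma lineDerivOp_lineDerivOp_apply [NormedSpace ℝ V] (f : 𝓢(V, F)) (v w x : V) :
    (∂_{v} (∂_{w} f)) x = fderiv ℝ (fderiv ℝ f) x v w := by
  have hdiff : DifferentiableAt ℝ (fderiv ℝ f) x :=
    ((f.smooth 2).fderiv_right (m := 1) le_rfl).differentiable one_ne_zero x
  have hcoe : ⇑(∂_{w} f : 𝓢(V, F)) = fun y => fderiv ℝ f y w :=
    funext fun y => SchwartzMap.lineDerivOp_apply_eq_fderiv w f y
  rw [SchwartzMap.lineDerivOp_apply_eq_fderiv, hcoe, fderiv_clm_apply hdiff (by fun_prop)]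
  simp

lemma lineDerivOp_lineDerivOp_comm [NormedSpace ℝ V] (f : 𝓢(V, F)) (v w : V) :
    ∂_{v} (∂_{w} f) = ∂_{w} (∂_{v} f) := by
  ext x
  rw [lineDerivOp_lineDerivOp_apply, lineDerivOp_lineDerivOp_apply]
  exact ((f.smooth 2).contDiffAt (x := x)).isSymmSndFDerivAt (by simp) v w

variable [InnerProductSpace ℝ V] [FiniteDimensional ℝ V]

lemma laplacian_lineDerivOp (f : 𝓢(V, F)) (v : V) : Δ (∂_{v} f) = ∂_{v} (Δ f) := by
  simp only [SchwartzMap.laplacian_eq_sum (stdOrthonormalBasis ℝ V), LineDeriv.lineDerivOp_sum,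
    lineDerivOp_lineDerivOp_comm _ _ v]

variable [MeasurableSpace V] [BorelSpace V] {ι : Type*} [Fintype ι] {e : OrthonormalBasis ι ℝ V}

lemma integral_gaussAvg_lineDeriv_mul (s : ℝ) (f g : 𝓢(V, ℝ)) (v : V) :
    ∫ x, gaussAvg s (∂_{v} f) x * gaussAvg s g x
      = -∫ x, gaussAvg s f x * gaussAvg s (∂_{v} g) x := by
  simpa [eq_neg_iff_add_eq_zero, add_comm] using
    integral_bilin_gaussAvg_lineDeriv (.mul ℝ ℝ) s f g v

lemma integrable_gaussAvg_mul_gaussAvg (s : ℝ) (f g : 𝓢(V, ℝ)) :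
    Integrable fun x => gaussAvg s f x * gaussAvg s g x := by
  simpa using integrable_bilin_gaussAvg (.mul ℝ ℝ) s f g

lemma integral_gaussAvg_sum_mul {κ : Type*} (t : Finset κ) (s : ℝ) (f : κ → 𝓢(V, ℝ))
    (g : 𝓢(V, ℝ)) : ∫ x, gaussAvg s (∑ k ∈ t, f k) x * gaussAvg s g x
      = ∑ k ∈ t, ∫ x, gaussAvg s (f k) x * gaussAvg s g x := by
  simp only [gaussAvg_sum, Finset.sum_mul]
  exact integral_finsetSum _ fun k _ => integrable_gaussAvg_mul_gaussAvg s (f k) g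

lemma sum_integral_gaussAvg_lineDeriv_lineDeriv_mul {φ : 𝓢(V, ℝ)} {w : ι → 𝓢(V, ℝ)}
    (hw : ∑ k, ∂_{e k} (w k) = Δ φ) (s : ℝ) (g : 𝓢(V, ℝ)) (v : V) :
    ∑ j, ∫ x, gaussAvg s (∂_{e j} (∂_{v} φ)) x * gaussAvg s (∂_{e j} g) x
      = ∑ k, ∫ x, gaussAvg s (∂_{e k} (w k)) x * gaussAvg s (∂_{v} g) x := by
  have hj (j : ι) : ∫ x, gaussAvg s (∂_{e j} (∂_{v} φ)) x * gaussAvg s (∂_{e j} g) x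
      = -∫ x, gaussAvg s (∂_{e j} (∂_{e j} (∂_{v} φ))) x * gaussAvg s g x := by
    rw [integral_gaussAvg_lineDeriv_mul s (∂_{e j} (∂_{v} φ)), neg_neg]
  rw [Finset.sum_congr rfl fun j _ => hj j, Finset.sum_neg_distrib, ← integral_gaussAvg_sum_mul,
    ← SchwartzMap.laplacian_eq_sum e, laplacian_lineDerivOp, integral_gaussAvg_lineDeriv_mul,
    neg_neg, ← hw, integral_gaussAvg_sum_mul]

variable {p q C ε : ℝ} {b : ℝ × ℝ → ℝ}

namespace IsBellman

lemma two_mul_le_sum_hessAlong (hb : IsBellman p q C ε b) (s : ℝ) (f g : 𝓢(V, ℝ)) (k i : ι)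
    (x : V) : 2 * (gaussAvg s (∂_{e k} f) x * gaussAvg s (∂_{e i} g) x)
      ≤ ∑ j, hessAlong b s (schwartzPair f g) (e j) x := by
  obtain ⟨τ, hτ, hess⟩ := hb.hess (gaussAvg s f x, gaussAvg s g x)
  simp only [hessAlong_schwartzPair]
  exact two_mul_le_sum_of_quadratic_le hτ
    (fun j => hess (gaussAvg s (∂_{e j} f) x, gaussAvg s (∂_{e j} g) x)) k i

lemma two_mul_integral_le_sum_hessAlong (hb : IsBellman p q C ε b) (s : ℝ) (f g : 𝓢(V, ℝ))
    (k i : ι) : 2 * ∫ x, gaussAvg s (∂_{e k} f) x * gaussAvg s (∂_{e i} g) x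
      ≤ ∑ j, ∫ x, hessAlong b s (schwartzPair f g) (e j) x := by
  have hint (j : ι) := integrable_hessAlong hb.contDiff s (schwartzPair f g) (e j)
  rw [← integral_const_mul, ← integral_finsetSum _ fun j _ => hint j]
  exact integral_mono ((integrable_gaussAvg_mul_gaussAvg s _ _).const_mul 2)
    (integrable_finsetSum _ fun j _ => hint j) fun x => hb.two_mul_le_sum_hessAlong s f g k i x

end IsBellman

/-- The quantity `∑ₖ ∫ b(wₖ, g) - ∫ ψ g` with all functions replaced by their Gaussian averages at
scale `s`; it is monotone in `s` when `ψ` is a Riesz-type transform of `w`. -/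
def bellmanFlow (b : ℝ × ℝ → ℝ) (w : ι → 𝓢(V, ℝ)) (ψ g : 𝓢(V, ℝ)) (s : ℝ) : ℝ :=
  (∑ k, ∫ x, b (gaussAvg s (w k) x, gaussAvg s g x)) - ∫ x, gaussAvg s ψ x * gaussAvg s g x

lemma hasDerivAt_bellmanFlow (hb : ContDiff ℝ 2 b) (h0 : b 0 = 0) (e : OrthonormalBasis ι ℝ V)
    (w : ι → 𝓢(V, ℝ)) (ψ g : 𝓢(V, ℝ)) (s : ℝ) :
    HasDerivAt (bellmanFlow b w ψ g) (-(s / (2 * Real.pi)) *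
      ((∑ k, ∑ j, ∫ x, hessAlong b s (schwartzPair (w k) g) (e j) x)
        - ∑ j, 2 * ∫ x, gaussAvg s (∂_{e j} ψ) x * gaussAvg s (∂_{e j} g) x)) s := by
  have hsum := HasDerivAt.fun_sum fun k (_ : k ∈ Finset.univ) =>
    hasDerivAt_integral_comp_gaussAvg hb h0 (schwartzPair (w k) g) e s
  have hmul := hasDerivAt_integral_bilin_gaussAvg (.mul ℝ ℝ) ψ g e s
  simp only [gaussAvg_schwartzPair, smul_eq_mul, ContinuousLinearMap.mul_apply'] at hsum hmul
  exact (hsum.sub hmul).congr_deriv (by rw [← Finset.mul_sum, mul_sub])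

lemma IsBellman.antitoneOn_bellmanFlow (hb : IsBellman p q C ε b) {φ : 𝓢(V, ℝ)}
    {w : ι → 𝓢(V, ℝ)} (hw : ∑ k, ∂_{e k} (w k) = Δ φ) (i : ι) (g : 𝓢(V, ℝ)) :
    AntitoneOn (bellmanFlow b w (∂_{e i} φ) g) (Set.Ici 0) := by
  have hderiv (s : ℝ) := hasDerivAt_bellmanFlow hb.contDiff hb.zero e w (∂_{e i} φ) g s
  refine antitoneOn_of_deriv_nonpos (convex_Ici 0)
    (fun s _ => (hderiv s).continuousAt.continuousWithinAt)
    (fun s _ => (hderiv s).differentiableAt.differentiableWithinAt) fun s hs => ?_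
  have hs0 : 0 ≤ s := interior_subset hs
  rw [(hderiv s).deriv, neg_mul, neg_nonpos, ← Finset.mul_sum,
    sum_integral_gaussAvg_lineDeriv_lineDeriv_mul hw, Finset.mul_sum]
  refine mul_nonneg (by positivity) (sub_nonneg.2 (Finset.sum_le_sum fun k _ => ?_))
  exact hb.two_mul_integral_le_sum_hessAlong s (w k) g k i

lemma exists_neg_div_le_bellmanFlow (hb : ∀ z, 0 ≤ b z) (w : ι → 𝓢(V, ℝ)) (φ g : 𝓢(V, ℝ)) (v : V) :
    ∃ D, ∀ s, 0 < s → -(D / s) ≤ bellmanFlow b w (∂_{v} φ) g s := by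
  obtain ⟨D, hD⟩ := exists_norm_gaussAvg_lineDeriv_le φ v
  refine ⟨D * ∫ x, ‖g x‖, fun s hs => ?_⟩
  have hDs : 0 ≤ D / s := (norm_nonneg _).trans (hD s hs 0)
  have hsum : 0 ≤ ∑ k, ∫ x, b (gaussAvg s (w k) x, gaussAvg s g x) :=
    Finset.sum_nonneg fun k _ => integral_nonneg fun x => hb _
  have hpair : ∫ x, gaussAvg s (∂_{v} φ) x * gaussAvg s g x ≤ (D * ∫ x, ‖g x‖) / s :=
    calc ∫ x, gaussAvg s (∂_{v} φ) x * gaussAvg s g x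
        ≤ ∫ x, D / s * ‖gaussAvg s g x‖ := by
          refine integral_mono (integrable_gaussAvg_mul_gaussAvg s _ _)
            ((integrable_gaussAvg s g).norm.const_mul _) fun x => (Real.le_norm_self _).trans ?_
          rw [norm_mul]
          gcongr
          exact hD s hs x
      _ = D / s * ∫ x, ‖gaussAvg s g x‖ := integral_const_mul ..
      _ ≤ D / s * ∫ x, ‖g x‖ := mul_le_mul_of_nonneg_left (integral_norm_gaussAvg_le s g) hDs
      _ = (D * ∫ x, ‖g x‖) / s := by ring
  unfold bellmanFlow
  linarith

lemma IsBellman.integral_lineDeriv_mul_le (hb : IsBellman p q C ε b) {φ : 𝓢(V, ℝ)}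
    {w : ι → 𝓢(V, ℝ)} (hw : ∑ k, ∂_{e k} (w k) = Δ φ) (i : ι) (g : 𝓢(V, ℝ)) :
    ∫ x, (∂_{e i} φ) x * g x ≤ ∑ k, ∫ x, b (w k x, g x) := by
  obtain ⟨D, hD⟩ := exists_neg_div_le_bellmanFlow hb.nonneg w φ g (e i)
  have hlim : Filter.Tendsto (fun s : ℝ => -(D / s)) Filter.atTop (nhds 0) := by
    simpa using (Filter.tendsto_id.const_div_atTop D).neg
  have hnonneg : 0 ≤ bellmanFlow b w (∂_{e i} φ) g 0 :=
    le_of_tendsto hlim <| (Filter.eventually_gt_atTop 0).mono fun s hs =>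
      (hD s hs).trans (hb.antitoneOn_bellmanFlow hw i g Set.self_mem_Ici hs.le hs.le)
  simpa [bellmanFlow] using hnonneg

lemma integrable_abs_rpow {α : Type*} [MeasurableSpace α] {μ : Measure α} {f : α → ℝ}
    (hf : MemLp f (ENNReal.ofReal p) μ) (hp : 0 < p) : Integrable (fun x => |f x| ^ p) μ := by
  simpa [ENNReal.toReal_ofReal hp.le] using
    hf.integrable_norm_rpow (by simpa using hp) ENNReal.ofReal_ne_top

lemma IsBellman.integral_comp_le (hb : IsBellman p q C ε b) (hp : 0 < p) (hq : 0 < q)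
    (f g : 𝓢(V, ℝ)) :
    ∫ x, b (f x, g x) ≤ C * ((∫ x, |f x| ^ p) + ∫ x, |g x| ^ q)
      + C * ε * ((∫ x, |f x|) + ∫ x, |g x|) := by
  have hfp := integrable_abs_rpow (f.memLp _ volume) hp
  have hgq := integrable_abs_rpow (g.memLp _ volume) hq
  have hf := f.integrable (μ := volume).abs
  have hg := g.integrable (μ := volume).abs
  have hbfg : Integrable fun x => b (f x, g x) := by
    simpa using integrable_comp_gaussAvg (hb.contDiff.of_le one_le_two) hb.zero 0
      (schwartzPair f g)
  have hmain : Integrable fun x => C * (|f x| ^ p + |g x| ^ q) := (hfp.add hgq).const_mul C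
  have herr : Integrable fun x => C * ε * (|f x| + |g x|) := (hf.add hg).const_mul (C * ε)
  rw [← integral_add hfp hgq, ← integral_add hf hg, ← integral_const_mul, ← integral_const_mul,
    ← integral_add hmain herr]
  exact integral_mono hbfg (hmain.add herr) fun x => hb.le (f x, g x)

lemma exists_integral_lineDeriv_mul_le (hpq : p.HolderConjugate q) (e : OrthonormalBasis ι ℝ V) :
    ∃ C, 0 < C ∧ ∀ (φ : 𝓢(V, ℝ)) (w : ι → 𝓢(V, ℝ)), ∑ k, ∂_{e k} (w k) = Δ φ →
      ∀ (i : ι) (g : 𝓢(V, ℝ)),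
        ∫ x, (∂_{e i} φ) x * g x ≤ C * ∑ k, ((∫ x, |w k x| ^ p) + ∫ x, |g x| ^ q) := by
  obtain ⟨C, hC, hbell⟩ := exists_isBellman hpq
  refine ⟨C, hC, fun φ w hw i g => ?_⟩
  set P := ∑ k, ((∫ x, |w k x| ^ p) + ∫ x, |g x| ^ q)
  set R := ∑ k, ((∫ x, |w k x|) + ∫ x, |g x|)
  have hε : ∀ ε, 0 < ε → ε ≤ 1 → ∫ x, (∂_{e i} φ) x * g x ≤ C * P + C * ε * R := by
    intro ε hε hε1
    obtain ⟨b, hb⟩ := hbell ε hε hε1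
    calc ∫ x, (∂_{e i} φ) x * g x ≤ ∑ k, ∫ x, b (w k x, g x) := hb.integral_lineDeriv_mul_le hw i g
      _ ≤ ∑ k, (C * ((∫ x, |w k x| ^ p) + ∫ x, |g x| ^ q)
          + C * ε * ((∫ x, |w k x|) + ∫ x, |g x|)) :=
        Finset.sum_le_sum fun k _ => hb.integral_comp_le hpq.pos hpq.symm.pos (w k) g
      _ = C * P + C * ε * R := by rw [Finset.sum_add_distrib, ← Finset.mul_sum, ← Finset.mul_sum]
  have hlim : Filter.Tendsto (fun ε => C * P + C * ε * R) (nhdsWithin 0 (Set.Ioi 0))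
      (nhds (C * P)) := by
    have hcont : Continuous fun ε => C * P + C * ε * R := by fun_prop
    simpa using (hcont.tendsto 0).mono_left nhdsWithin_le_nhds
  refine ge_of_tendsto hlim ?_
  filter_upwards [Ioc_mem_nhdsGT zero_lt_one] with ε hε01
  exact hε ε hε01.1 hε01.2

end RieszBellman

section Duality

variable {p q C D : ℝ}

lemma abs_abs_rpow_sub_two_mul_self_rpow (hpq : p.HolderConjugate q) (a : ℝ) :
    |(|a| ^ (p - 2) * a)| ^ q = |a| ^ p := by
  rcases eq_or_ne a 0 with rfl | ha
  · simp [Real.zero_rpow hpq.ne_zero, Real.zero_rpow hpq.symm.ne_zero]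
  · have ha0 : 0 < |a| := abs_pos.2 ha
    have hexp : (p - 2 + 1) * q = p := by linear_combination hpq.sub_one_mul_conj
    rw [abs_mul, abs_of_pos (Real.rpow_pos_of_pos ha0 _), ← Real.rpow_add_one ha0.ne',
      ← Real.rpow_mul ha0.le, hexp]

lemma mul_abs_rpow_sub_two_mul_self (hp : p ≠ 0) (a : ℝ) : a * (|a| ^ (p - 2) * a) = |a| ^ p := by
  rcases eq_or_ne a 0 with rfl | ha
  · simp [Real.zero_rpow hp]
  · have : |a| ≠ 0 := abs_ne_zero.2 ha
    rw [Real.rpow_sub (abs_pos.2 ha), Real.rpow_two, sq_abs]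
    field_simp

variable {α : Type*} [MeasurableSpace α] {μ : Measure α} {f : α → ℝ}

lemma eLpNorm_ofReal_eq_integral_abs_rpow (hf : MemLp f (ENNReal.ofReal p) μ) (hp : 0 < p) :
    eLpNorm f (ENNReal.ofReal p) μ = ENNReal.ofReal ((∫ x, |f x| ^ p ∂μ) ^ p⁻¹) := by
  rw [hf.eLpNorm_eq_integral_rpow_norm (by simpa using hp) ENNReal.ofReal_ne_top,
    ENNReal.toReal_ofReal hp.le]
  simp only [Real.norm_eq_abs]

lemma norm_toLp_rpow (hf : MemLp f (ENNReal.ofReal p) μ) (hp : 0 < p) :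
    ‖hf.toLp f‖ ^ p = ∫ x, |f x| ^ p ∂μ := by
  have hint : 0 ≤ ∫ x, |f x| ^ p ∂μ := integral_nonneg fun x => by positivity
  rw [Lp.norm_toLp, eLpNorm_ofReal_eq_integral_abs_rpow hf hp,
    ENNReal.toReal_ofReal (by positivity), Real.rpow_inv_rpow hint hp.ne']

lemma eLpNorm_rpow_eq_ofReal_integral (hf : MemLp f (ENNReal.ofReal p) μ) (hp : 0 < p) :
    eLpNorm f (ENNReal.ofReal p) μ ^ p = ENNReal.ofReal (∫ x, |f x| ^ p ∂μ) := by
  have hint : 0 ≤ ∫ x, |f x| ^ p ∂μ := integral_nonneg fun x => by positivity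
  rw [eLpNorm_ofReal_eq_integral_abs_rpow hf hp,
    ENNReal.ofReal_rpow_of_nonneg (by positivity) hp.le, Real.rpow_inv_rpow hint hp.ne']

lemma memLp_abs_rpow_sub_two_mul_self (hpq : p.HolderConjugate q)
    (hf : MemLp f (ENNReal.ofReal p) μ) :
    MemLp (fun x => |f x| ^ (p - 2) * f x) (ENNReal.ofReal q) μ := by
  have hmeas : AEStronglyMeasurable (fun x => |f x| ^ (p - 2) * f x) μ := by
    have := hf.1.aemeasurable
    exact AEMeasurable.aestronglyMeasurable (by fun_prop)
  rw [← integrable_norm_rpow_iff hmeas (by simpa using hpq.symm.pos) ENNReal.ofReal_ne_top,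
    ENNReal.toReal_ofReal hpq.symm.nonneg]
  simp only [Real.norm_eq_abs, abs_abs_rpow_sub_two_mul_self_rpow hpq]
  exact integrable_abs_rpow hf hpq.pos

-- The test function is `δ |f| ^ (p - 2) f`, with `δ` so small that half of the left side survives.
lemma integral_abs_rpow_le_of_forall_integral_mul_le (hpq : p.HolderConjugate q) (hC : 0 < C)
    (hf : MemLp f (ENNReal.ofReal p) μ)
    (h : ∀ g : α → ℝ, MemLp g (ENNReal.ofReal q) μ →
      ∫ x, f x * g x ∂μ ≤ D + C * ∫ x, |g x| ^ q ∂μ) :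
    ∫ x, |f x| ^ p ∂μ ≤ 2 * (2 * C) ^ (p - 1) * D := by
  set P := ∫ x, |f x| ^ p ∂μ
  set δ := (2 * C) ^ (-(p - 1))
  have hδ0 : 0 < δ := by positivity
  have hδq : C * δ ^ q = δ / 2 := by
    have hexp : -(p - 1) * q = -(p - 1) - 1 := by linear_combination -hpq.sub_one_mul_conj
    have hpow : δ ^ q = δ / (2 * C) := by
      rw [← Real.rpow_mul (by positivity), hexp, Real.rpow_sub_one (by positivity)]
    rw [hpow]
    field_simp
  have htest : δ * P ≤ D + C * (δ ^ q * P) := by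
    simpa only [Pi.smul_apply, smul_eq_mul, mul_left_comm _ δ, abs_mul δ, abs_of_pos hδ0,
      mul_abs_rpow_sub_two_mul_self hpq.ne_zero, Real.mul_rpow hδ0.le (abs_nonneg _),
      abs_abs_rpow_sub_two_mul_self_rpow hpq, integral_const_mul]
      using h _ ((memLp_abs_rpow_sub_two_mul_self hpq hf).const_smul δ)
  rw [← mul_assoc, hδq] at htest
  calc P = δ⁻¹ * (δ * P) := by field_simp
    _ ≤ δ⁻¹ * (2 * D) := by
        refine mul_le_mul_of_nonneg_left ?_ (by positivity)
        linarith
    _ = 2 * (2 * C) ^ (p - 1) * D := by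
        rw [← Real.rpow_neg (by positivity), neg_neg]
        ring

variable {V : Type*} [NormedAddCommGroup V] [NormedSpace ℝ V] [FiniteDimensional ℝ V]
  [MeasurableSpace V] [BorelSpace V] {ν : Measure V} [ν.HasTemperateGrowth]
  [IsFiniteMeasureOnCompacts ν]

lemma integral_mul_le_of_forall_schwartz (hpq : p.HolderConjugate q) {f : V → ℝ}
    (hf : MemLp f (ENNReal.ofReal p) ν)
    (h : ∀ g : 𝓢(V, ℝ), ∫ x, f x * g x ∂ν ≤ D + C * ∫ x, |g x| ^ q ∂ν) {g : V → ℝ}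
    (hg : MemLp g (ENNReal.ofReal q) ν) :
    ∫ x, f x * g x ∂ν ≤ D + C * ∫ x, |g x| ^ q ∂ν := by
  have : Fact (1 ≤ ENNReal.ofReal p) := ⟨by simpa using hpq.lt.le⟩
  have : Fact (1 ≤ ENNReal.ofReal q) := ⟨by simpa using hpq.symm.lt.le⟩
  have : ENNReal.HolderConjugate (ENNReal.ofReal p) (ENNReal.ofReal q) := hpq.ennrealOfReal
  let L := (ContinuousLinearMap.mul ℝ ℝ).lpPairing ν (ENNReal.ofReal p) (ENNReal.ofReal q)
    (hf.toLp f)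
  have hL {g : V → ℝ} (hg : MemLp g (ENNReal.ofReal q) ν) :
      L (hg.toLp g) = ∫ x, f x * g x ∂ν := by
    refine (ContinuousLinearMap.lpPairing_eq_integral ..).trans (integral_congr_ae ?_)
    filter_upwards [hf.coeFn_toLp, hg.coeFn_toLp] with x hfx hgx
    simp [hfx, hgx]
  have hclosed : IsClosed {G | L G ≤ D + C * ‖G‖ ^ q} :=
    isClosed_le L.continuous (continuous_const.add (continuous_const.mul
      (continuous_norm.rpow_const fun _ => Or.inr hpq.symm.nonneg)))
  rw [← hL hg, ← norm_toLp_rpow hg hpq.symm.pos]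
  refine (SchwartzMap.denseRange_toLpCLM (F := ℝ) ENNReal.ofReal_ne_top).induction_on
    (hg.toLp g) hclosed fun g => ?_
  rw [SchwartzMap.toLpCLM_apply, SchwartzMap.toLp, hL, norm_toLp_rpow _ hpq.symm.pos]
  exact h g

end Duality

section RieszTransform

variable {V : Type*} [NormedAddCommGroup V] [InnerProductSpace ℝ V] [FiniteDimensional ℝ V]
  [MeasurableSpace V] [BorelSpace V] {ι : Type*} [Fintype ι] {q : ℝ}

lemma exists_integral_abs_lineDeriv_rpow_le (hq : 1 < q) (e : OrthonormalBasis ι ℝ V) :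
    ∃ C, 0 ≤ C ∧ ∀ (φ : 𝓢(V, ℝ)) (w : ι → 𝓢(V, ℝ)), ∑ k, ∂_{e k} (w k) = Δ φ →
      ∀ i, ∫ x, |(∂_{e i} φ) x| ^ q ≤ C * ∑ k, ∫ x, |w k x| ^ q := by
  have hqq := Real.HolderConjugate.conjExponent hq
  obtain ⟨C, hC, hbound⟩ := exists_integral_lineDeriv_mul_le hqq e
  set n := (Fintype.card ι : ℝ)
  refine ⟨2 * (2 * (C * n)) ^ (q - 1) * C, by positivity, fun φ w hw i => ?_⟩
  have hn0 : 0 < n := by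
    have : Nonempty ι := ⟨i⟩
    exact Nat.cast_pos.2 Fintype.card_pos
  rw [mul_assoc]
  refine integral_abs_rpow_le_of_forall_integral_mul_le hqq (mul_pos hC hn0)
    ((∂_{e i} φ).memLp _) fun g hg => integral_mul_le_of_forall_schwartz hqq
      ((∂_{e i} φ).memLp _) (fun g => (hbound φ w hw i g).trans_eq ?_) hg
  rw [Finset.sum_add_distrib, Finset.sum_const, Finset.card_univ, nsmul_eq_mul, mul_add, mul_assoc]

lemma exists_eLpNorm_lineDeriv_rpow_le (hq : 1 < q) (e : OrthonormalBasis ι ℝ V) :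
    ∃ C : NNReal, ∀ (φ : 𝓢(V, ℝ)) (w : ι → 𝓢(V, ℝ)), ∑ k, ∂_{e k} (w k) = Δ φ →
      ∀ i, eLpNorm (∂_{e i} φ : 𝓢(V, ℝ)) (ENNReal.ofReal q) volume ^ q
        ≤ C * ∑ k, eLpNorm (w k) (ENNReal.ofReal q) volume ^ q := by
  obtain ⟨C, hC, hbound⟩ := exists_integral_abs_lineDeriv_rpow_le hq e
  have heLp (f : 𝓢(V, ℝ)) : eLpNorm f (ENNReal.ofReal q) volume ^ q
      = ENNReal.ofReal (∫ x, |f x| ^ q) :=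
    eLpNorm_rpow_eq_ofReal_integral (f.memLp _ _) (by linarith)
  refine ⟨.mk C hC, fun φ w hw i => ?_⟩
  simp only [heLp]
  rw [← ENNReal.ofReal_sum_of_nonneg fun k _ => integral_nonneg fun x => by positivity,
    ← ENNReal.ofReal_eq_coe_nnreal hC, ← ENNReal.ofReal_mul hC]
  exact ENNReal.ofReal_le_ofReal (hbound φ w hw i)

theorem exists_eLpNorm_lineDeriv_le (hq : 1 < q) (e : OrthonormalBasis ι ℝ V) :
    ∃ C : NNReal, ∀ (φ : 𝓢(V, ℝ)) (w : ι → 𝓢(V, ℝ)), ∑ k, ∂_{e k} (w k) = Δ φ →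
      ∀ N, (∀ k, eLpNorm (w k) (ENNReal.ofReal q) volume ≤ N) →
        ∀ i, eLpNorm (∂_{e i} φ : 𝓢(V, ℝ)) (ENNReal.ofReal q) volume ≤ C * N := by
  obtain ⟨C, hbound⟩ := exists_eLpNorm_lineDeriv_rpow_le hq e
  have hq0 : 0 < q := by linarith
  refine ⟨(C * Fintype.card ι) ^ q⁻¹, fun φ w hw N hN i => ?_⟩
  rw [← ENNReal.rpow_le_rpow_iff hq0, ENNReal.mul_rpow_of_nonneg _ _ hq0.le,
    ← ENNReal.coe_rpow_of_nonneg _ hq0.le, NNReal.rpow_inv_rpow hq0.ne']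
  calc eLpNorm (∂_{e i} φ : 𝓢(V, ℝ)) (ENNReal.ofReal q) volume ^ q
      ≤ C * ∑ k, eLpNorm (w k) (ENNReal.ofReal q) volume ^ q := hbound φ w hw i
    _ ≤ C * ∑ _k : ι, N ^ q := by
        gcongr with k
        exact hN k
    _ = (C * Fintype.card ι : NNReal) * N ^ q := by
        simp [mul_assoc]

end RieszTransform

section GradAddSMul

variable {V : Type*} [NormedAddCommGroup V] [InnerProductSpace ℝ V] {ι : Type*}
  [Fintype ι]

/-- The field `∇vⱼ + σ ∂ⱼv` of a vector field `v` given by its components in the orthonormal frame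
`e`. For `σ = 1` it is twice the `j`-th column of the strain tensor, and in dimension three, with
`j` the last index, it is the cross product of `e₃` with the vorticity for `σ = -1`. -/
def gradAddSMul (e : OrthonormalBasis ι ℝ V) (σ : ℝ) (v : ι → 𝓢(V, ℝ)) (j : ι) (x : V) :
    EuclideanSpace ℝ ι :=
  WithLp.toLp 2 fun k => (∂_{e k} (v j) + σ • ∂_{e j} (v k) : 𝓢(V, ℝ)) x

lemma norm_toLp_le_sum_abs (f : ι → ℝ) : ‖WithLp.toLp 2 f‖ ≤ ∑ i, |f i| := by
  rw [EuclideanSpace.norm_eq]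
  exact Real.sqrt_le_iff.2 ⟨Finset.sum_nonneg fun i _ => abs_nonneg _,
    Finset.sum_sq_le_sq_sum_of_nonneg fun i _ => abs_nonneg _⟩

lemma eLpNorm_toLp_le_sum {α : Type*} [MeasurableSpace α] {μ : Measure α} {q : ℝ≥0∞} (hq : 1 ≤ q)
    {f : ι → α → ℝ} (hf : ∀ i, AEStronglyMeasurable (f i) μ) :
    eLpNorm (fun x => WithLp.toLp 2 fun i => f i x) q μ ≤ ∑ i, eLpNorm (f i) q μ := by
  calc eLpNorm (fun x => WithLp.toLp 2 fun i => f i x) q μ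
      ≤ eLpNorm (∑ i, fun x => ‖f i x‖) q μ :=
        eLpNorm_mono_real fun x => by simpa using norm_toLp_le_sum_abs fun i => f i x
    _ ≤ ∑ i, eLpNorm (fun x => ‖f i x‖) q μ := eLpNorm_sum_le (fun i _ => (hf i).norm) hq
    _ = ∑ i, eLpNorm (f i) q μ := by simp only [eLpNorm_norm]

variable {e : OrthonormalBasis ι ℝ V} {v : ι → 𝓢(V, ℝ)}

lemma sum_lineDerivOp_grad_add_eq_laplacian [FiniteDimensional ℝ V]
    (hv : ∑ k, ∂_{e k} (v k) = 0) (σ : ℝ) (j : ι) :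
    ∑ k, ∂_{e k} (∂_{e k} (v j) + σ • ∂_{e j} (v k)) = Δ (v j) := by
  simp only [SchwartzMap.laplacian_eq_sum e, LineDeriv.lineDerivOp_add,
    LineDeriv.lineDerivOp_smul, Finset.sum_add_distrib, ← Finset.smul_sum,
    lineDerivOp_lineDerivOp_comm _ _ (e j)]
  rw [← LineDeriv.lineDerivOp_sum, hv, LineDeriv.lineDerivOp_zero, smul_zero, add_zero]

variable [FiniteDimensional ℝ V] [MeasurableSpace V] [BorelSpace V]

lemma eLpNorm_le_eLpNorm_gradAddSMul (q : ℝ≥0∞) (σ : ℝ) (j k : ι) :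
    eLpNorm (∂_{e k} (v j) + σ • ∂_{e j} (v k) : 𝓢(V, ℝ)) q volume
      ≤ eLpNorm (gradAddSMul e σ v j) q volume :=
  eLpNorm_mono fun x => PiLp.norm_apply_le (gradAddSMul e σ v j x) k

lemma eLpNorm_grad_add_smul_le {q : ℝ≥0∞} (hq : 1 ≤ q) {σ : ℝ} (hσ : σ ≠ 0) (τ : ℝ) (j k : ι) :
    eLpNorm (∂_{e k} (v j) + τ • ∂_{e j} (v k) : 𝓢(V, ℝ)) q volume
      ≤ ‖1 - τ / σ‖ₑ * eLpNorm (∂_{e k} (v j) : 𝓢(V, ℝ)) q volume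
        + ‖τ / σ‖ₑ * eLpNorm (∂_{e k} (v j) + σ • ∂_{e j} (v k) : 𝓢(V, ℝ)) q volume := by
  have hsplit : ∂_{e k} (v j) + τ • ∂_{e j} (v k)
      = (1 - τ / σ) • ∂_{e k} (v j) + (τ / σ) • (∂_{e k} (v j) + σ • ∂_{e j} (v k)) := by
    match_scalars <;> field_simp
    ring
  rw [hsplit, ← eLpNorm_const_smul, ← eLpNorm_const_smul]
  exact eLpNorm_add_le (SchwartzMap.continuous _).aestronglyMeasurable
    (SchwartzMap.continuous _).aestronglyMeasurable hq

theorem exists_eLpNorm_gradAddSMul_le {q : ℝ} (hq : 1 < q) (e : OrthonormalBasis ι ℝ V)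
    {σ : ℝ} (hσ : σ ≠ 0) (τ : ℝ) :
    ∃ C : NNReal, ∀ v : ι → 𝓢(V, ℝ), ∑ k, ∂_{e k} (v k) = 0 → ∀ j,
      eLpNorm (gradAddSMul e τ v j) (ENNReal.ofReal q) volume
        ≤ C * eLpNorm (gradAddSMul e σ v j) (ENNReal.ofReal q) volume := by
  obtain ⟨C, hC⟩ := exists_eLpNorm_lineDeriv_le hq e
  have hq1 : 1 ≤ ENNReal.ofReal q := by simpa using hq.le
  refine ⟨Fintype.card ι * (‖1 - τ / σ‖₊ * C + ‖τ / σ‖₊), fun v hv j => ?_⟩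
  set N := eLpNorm (gradAddSMul e σ v j) (ENNReal.ofReal q) volume
  have hσN (k) := eLpNorm_le_eLpNorm_gradAddSMul (e := e) (v := v) (ENNReal.ofReal q) σ j k
  have hgrad := hC (v j) _ (sum_lineDerivOp_grad_add_eq_laplacian hv σ j) N hσN
  calc eLpNorm (gradAddSMul e τ v j) (ENNReal.ofReal q) volume
      ≤ ∑ k, eLpNorm (∂_{e k} (v j) + τ • ∂_{e j} (v k) : 𝓢(V, ℝ)) (ENNReal.ofReal q) volume :=
        eLpNorm_toLp_le_sum hq1 fun k => (SchwartzMap.continuous _).aestronglyMeasurable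
    _ ≤ ∑ _k : ι, (‖1 - τ / σ‖ₑ * (C * N) + ‖τ / σ‖ₑ * N) := by
        refine Finset.sum_le_sum fun k _ => (eLpNorm_grad_add_smul_le hq1 hσ τ j k).trans ?_
        gcongr
        exacts [hgrad k, hσN k]
    _ = (Fintype.card ι * (‖1 - τ / σ‖₊ * C + ‖τ / σ‖₊) : NNReal) * N := by
        simp [enorm_eq_nnnorm]
        ring

end GradAddSMul

lemma lintegral_rpow_ne_top_of_ae_le_mul {α : Type*} [MeasurableSpace α] {μ : Measure α}
    {f g : α → ℝ≥0∞} {p : ℝ} (hp : 0 ≤ p) {C : NNReal} (h : ∀ᵐ t ∂μ, f t ≤ C * g t)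
    (hg : ∫⁻ t, g t ^ p ∂μ ≠ ⊤) : ∫⁻ t, f t ^ p ∂μ ≠ ⊤ := by
  have hC : (C : ℝ≥0∞) ^ p ≠ ⊤ := ENNReal.rpow_ne_top_of_nonneg hp ENNReal.coe_ne_top
  refine ne_top_of_le_ne_top (ENNReal.mul_ne_top hC hg) ?_
  rw [← lintegral_const_mul' _ _ hC]
  refine lintegral_mono_ae (h.mono fun t ht => ?_)
  rw [← ENNReal.mul_rpow_of_nonneg _ _ hp]
  gcongr

theorem e3CrossVort_blowup_iff_strainE3_blowup_general {V : Type*} [NormedAddCommGroup V]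
    [InnerProductSpace ℝ V] [FiniteDimensional ℝ V] [MeasurableSpace V] [BorelSpace V]
    {ι : Type*} [Fintype ι] (e : OrthonormalBasis ι ℝ V) (j : ι) {σ τ : ℝ} (hσ : σ ≠ 0)
    (hτ : τ ≠ 0) {q p : ℝ} (hq : 1 < q) (hp : 0 ≤ p) {α : Type*} [MeasurableSpace α]
    {μ : Measure α} (u : α → ι → 𝓢(V, ℝ)) (hdiv : ∀ᵐ t ∂μ, ∑ k, ∂_{e k} (u t k) = 0) :
    ∫⁻ t, eLpNorm (gradAddSMul e σ (u t) j) (ENNReal.ofReal q) volume ^ p ∂μ = ⊤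
      ↔ ∫⁻ t, eLpNorm (gradAddSMul e τ (u t) j) (ENNReal.ofReal q) volume ^ p ∂μ = ⊤ := by
  obtain ⟨C, hC⟩ := exists_eLpNorm_gradAddSMul_le hq e hσ τ
  obtain ⟨D, hD⟩ := exists_eLpNorm_gradAddSMul_le hq e hτ σ
  rw [← not_iff_not]
  exact ⟨lintegral_rpow_ne_top_of_ae_le_mul hp (hdiv.mono fun t ht => hC (u t) ht j),
    lintegral_rpow_ne_top_of_ae_le_mul hp (hdiv.mono fun t ht => hD (u t) ht j)⟩

section Dimension3

local notation "E3" => EuclideanSpace ℝ (Fin 3)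

lemma lineDerivOp_basisFun_apply (v : Fin 3 → 𝓢(E3, ℝ)) (i j : Fin 3) (x : E3) :
    (∂_{EuclideanSpace.basisFun (Fin 3) ℝ i} (v j)) x = pdW v i j x := by
  rw [EuclideanSpace.basisFun_apply]
  exact SchwartzMap.lineDerivOp_apply_eq_fderiv ..

lemma sum_lineDerivOp_basisFun_eq_zero {v : Fin 3 → 𝓢(E3, ℝ)} (hv : ∀ x, ∑ i, pdW v i i x = 0) :
    ∑ i, ∂_{EuclideanSpace.basisFun (Fin 3) ℝ i} (v i) = 0 := by
  ext x
  simpa [lineDerivOp_basisFun_apply, -EuclideanSpace.basisFun_apply] using hv x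

lemma twoStrainE3Field_eq_gradAddSMul (u : ℝ → Fin 3 → 𝓢(E3, ℝ)) (t : ℝ) :
    twoStrainE3Field u t = gradAddSMul (EuclideanSpace.basisFun (Fin 3) ℝ) 1 (u t) 2 := by
  ext x k
  have hsymm : 2 * strainW (u t) x k 2 = pdW (u t) k 2 x + pdW (u t) 2 k x :=
    mul_div_cancel₀ _ two_ne_zero
  simpa [twoStrainE3Field, toE3, gradAddSMul, lineDerivOp_basisFun_apply, Matrix.mulVec_eq_sum,
    Fin.sum_univ_three, -EuclideanSpace.basisFun_apply] using hsymm

lemma e3CrossVortField_eq_gradAddSMul (u : ℝ → Fin 3 → 𝓢(E3, ℝ)) (t : ℝ) :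
    e3CrossVortField u t = gradAddSMul (EuclideanSpace.basisFun (Fin 3) ℝ) (-1) (u t) 2 := by
  ext x k
  fin_cases k <;>
    simp [e3CrossVortField, toE3, gradAddSMul, cross, vortW, lineDerivOp_basisFun_apply,
      -EuclideanSpace.basisFun_apply, sub_eq_add_neg]

end Dimension3

/-- Fix `1 < q < ∞`, `0 < p < ∞`, `0 < T ≤ ∞`. For a time-dependent
divergence-free Schwartz vector field `u` on `[0, T) × ℝ³`, with
`t ↦ ‖2S(t,·)e₃‖_{L^q}` and `t ↦ ‖(e₃ × ω)(t,·)‖_{L^q}` measurable, one has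
`∫₀^T ‖(e₃ × ω)(t,·)‖_{L^q}^p dt = ∞` iff `∫₀^T ‖2S(t,·)e₃‖_{L^q}^p dt = ∞`:
the Chae–Choe criterion on `e₃ × ω` is equivalent to the criterion on `S e₃`. -/
theorem e3CrossVort_blowup_iff_strainE3_blowup (q p : ℝ) (hq1 : 1 < q) (hp : 0 < p)
    (T : ℝ≥0∞) (hT : 0 < T)
    (u : ℝ → Fin 3 → SchwartzMap (EuclideanSpace ℝ (Fin 3)) ℝ)
    (hdiv : ∀ t : ℝ, 0 ≤ t → ENNReal.ofReal t < T → ∀ x, ∑ i, pdW (u t) i i x = 0)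
    (hmeasS : Measurable fun t => eLpNorm (twoStrainE3Field u t) (ENNReal.ofReal q) volume)
    (hmeasω : Measurable fun t => eLpNorm (e3CrossVortField u t) (ENNReal.ofReal q) volume) :
    (∫⁻ t in {t : ℝ | 0 ≤ t ∧ ENNReal.ofReal t < T},
        (eLpNorm (e3CrossVortField u t) (ENNReal.ofReal q) volume) ^ p) = ⊤
      ↔ (∫⁻ t in {t : ℝ | 0 ≤ t ∧ ENNReal.ofReal t < T},
          (eLpNorm (twoStrainE3Field u t) (ENNReal.ofReal q) volume) ^ p) = ⊤ := by
  simp only [e3CrossVortField_eq_gradAddSMul, twoStrainE3Field_eq_gradAddSMul]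
  have htime : MeasurableSet {t : ℝ | 0 ≤ t ∧ ENNReal.ofReal t < T} :=
    measurableSet_Ici.inter (measurableSet_lt ENNReal.measurable_ofReal measurable_const)
  exact e3CrossVort_blowup_iff_strainE3_blowup_general _ 2 (neg_ne_zero.2 one_ne_zero) one_ne_zero
    hq1 hp.le u (ae_restrict_of_forall_mem htime fun t ht =>
      sum_lineDerivOp_basisFun_eq_zero (hdiv t ht.1 ht.2))
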